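/- Let R be a commutative noetherian ring and let X be a resolving subcategory of mod R contained in LPD(R), the subcategory of modules M with pd_{R_p} M_p < ∞ for all primes p. Then for a finitely generated R-module M, the following are equivalent: (1) M ∈ X; (2) for every p ∈ NF(M) there exists X ∈ X such that pd_{R_p} M_p ≤ pd_{R_p} X_p. -/

import Mathlib

universe u

open CategoryTheory

namespace ResolvPaper

variable (R : Type u) [CommRing R]

/-- `IsSES f g` means `0 → A → B → C → 0` is a short exact sequence. -/
def IsSES {R : Type u} [CommRing R] {A B C : Type u} [AddCommGroup A] [Module R A]
    [AddCommGroup B] [Module R B] [AddCommGroup C] [Module R C]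
    (f : A →ₗ[R] B) (g : B →ₗ[R] C) : Prop :=
  Function.Injective f ∧ Function.Surjective g ∧ LinearMap.range f = LinearMap.ker g

/-- A resolving subcategory of `mod R`, viewed as a set of bundled modules
closed under isomorphism, containing the finitely generated projective modules, and closed
under direct summands, extensions and syzygies. -/
structure IsResolving (𝒳 : Set (ModuleCat.{u} R)) : Prop where
  fg : ∀ M ∈ 𝒳, Module.Finite R M
  iso_closed : ∀ M N : ModuleCat.{u} R, Nonempty (M ≃ₗ[R] N) → M ∈ 𝒳 → N ∈ 𝒳
  proj_mem : ∀ M : ModuleCat.{u} R, Module.Finite R M → Module.Projective R M → M ∈ 𝒳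
  summand_closed : ∀ M N : ModuleCat.{u} R, ModuleCat.of R (↥M × ↥N) ∈ 𝒳 → M ∈ 𝒳
  ext_closed : ∀ (A B C : ModuleCat.{u} R) (f : A →ₗ[R] B) (g : B →ₗ[R] C),
    IsSES f g → A ∈ 𝒳 → C ∈ 𝒳 → B ∈ 𝒳
  syzygy_closed : ∀ (K P M : ModuleCat.{u} R) (f : K →ₗ[R] P) (g : P →ₗ[R] M),
    IsSES f g → Module.Finite R K → Module.Finite R P → Module.Projective R P →
    M ∈ 𝒳 → K ∈ 𝒳

/-- The resolving closure: the smallest resolving subcategory containing `S`. -/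
def resClosure (S : Set (ModuleCat.{u} R)) : Set (ModuleCat.{u} R) :=
  ⋂₀ {𝒳 | IsResolving R 𝒳 ∧ S ⊆ 𝒳}

/-- An extension-closed subcategory of `mod R`: closed under isomorphism,
direct summands and extensions. -/
def IsExtClosed (𝒳 : Set (ModuleCat.{u} R)) : Prop :=
  (∀ M N : ModuleCat.{u} R, Nonempty (M ≃ₗ[R] N) → M ∈ 𝒳 → N ∈ 𝒳) ∧
  (∀ M N : ModuleCat.{u} R, ModuleCat.of R (↥M × ↥N) ∈ 𝒳 → M ∈ 𝒳) ∧
  (∀ (A B C : ModuleCat.{u} R) (f : A →ₗ[R] B) (g : B →ₗ[R] C),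
    IsSES f g → A ∈ 𝒳 → C ∈ 𝒳 → B ∈ 𝒳)

/-- The extension closure of a set of modules. -/
def extClosure (S : Set (ModuleCat.{u} R)) : Set (ModuleCat.{u} R) :=
  ⋂₀ {𝒳 | IsExtClosed R 𝒳 ∧ S ⊆ 𝒳}

/-- `add R`: direct summands of finite free modules. -/
def addR : Set (ModuleCat.{u} R) :=
  {M | ∃ (n : ℕ) (N : ModuleCat.{u} R), Nonempty ((↥M × ↥N) ≃ₗ[R] (Fin n → R))}

/-- `pdLE n M` : the projective dimension of `M` is at most `n`. -/
def pdLE : ℕ → ModuleCat.{u} R → Prop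
  | 0, M => Module.Projective R M
  | n+1, M => ∃ (K P : ModuleCat.{u} R) (f : K →ₗ[R] P) (g : P →ₗ[R] M),
      Module.Finite R P ∧ Module.Projective R P ∧ IsSES f g ∧ pdLE n K

/-- The projective dimension, an element of `WithBot ℕ∞`; the zero module
has projective dimension `⊥ = -∞`. -/
noncomputable def pdim (M : ModuleCat.{u} R) : WithBot ℕ∞ :=
  sInf {x : WithBot ℕ∞ | (x = ⊥ ∧ Subsingleton M) ∨ ∃ n : ℕ, x = (n : ℕ∞) ∧ pdLE R n M}

/-- The depth of `M` with respect to the ideal `I`: the supremum of lengths of weakly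
`M`-regular sequences contained in `I`.  The zero module has depth `∞`. -/
noncomputable def depthE (I : Ideal R) (M : Type u) [AddCommGroup M] [Module R M] : ℕ∞ :=
  sSup {x : ℕ∞ | ∃ rs : List R, (∀ r ∈ rs, r ∈ I) ∧
    RingTheory.Sequence.IsWeaklyRegular M rs ∧ x = rs.length}

/-- The grade of an ideal: the length of a maximal `R`-regular sequence in `I`. -/
noncomputable def gradeE (I : Ideal R) : ℕ∞ := depthE R I R

/-- A grade consistent function on `Spec R`. -/
def GradeConsistent (f : PrimeSpectrum R → ℕ) : Prop :=
  (∀ p : PrimeSpectrum R, (f p : ℕ∞) ≤ gradeE R p.asIdeal) ∧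
  (∀ p q : PrimeSpectrum R, p.asIdeal ≤ q.asIdeal → f p ≤ f q)

/-- The localization of a module at a prime, as a module over the local ring `R_p`. -/
noncomputable abbrev localizeM (p : PrimeSpectrum R) (M : ModuleCat.{u} R) :
    ModuleCat.{u} (Localization.AtPrime p.asIdeal) :=
  ModuleCat.of (Localization.AtPrime p.asIdeal) (LocalizedModule p.asIdeal.primeCompl M)

/-- `pd_{R_p} M_p`. -/
noncomputable def localPdim (p : PrimeSpectrum R) (M : ModuleCat.{u} R) : WithBot ℕ∞ :=
  pdim (Localization.AtPrime p.asIdeal) (localizeM R p M)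

/-- `depth_{R_p} M_p`. -/
noncomputable def localDepth (p : PrimeSpectrum R) (M : ModuleCat.{u} R) : ℕ∞ :=
  depthE (Localization.AtPrime p.asIdeal)
    (IsLocalRing.maximalIdeal (Localization.AtPrime p.asIdeal))
    (LocalizedModule p.asIdeal.primeCompl M)

/-- The height of a prime ideal. -/
noncomputable def heightE (p : PrimeSpectrum R) : ℕ∞ := Order.height p

/-- `PD(R)` : finitely generated modules of finite projective dimension. -/
def PDcat : Set (ModuleCat.{u} R) :=
  {M | Module.Finite R M ∧ ∃ n : ℕ, pdLE R n M}

/-- `MCM(R)` : maximal Cohen-Macaulay modules. -/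
def MCMcat : Set (ModuleCat.{u} R) :=
  {M | Module.Finite R M ∧ ∀ p : PrimeSpectrum R, heightE R p ≤ localDepth R p M}

/-- The nonfree locus of a module. -/
def NF (M : ModuleCat.{u} R) : Set (PrimeSpectrum R) :=
  {p | ¬ Module.Free (Localization.AtPrime p.asIdeal) (LocalizedModule p.asIdeal.primeCompl M)}

/-- The infinite projective dimension locus of a module. -/
def IPD (M : ModuleCat.{u} R) : Set (PrimeSpectrum R) :=
  {p | localPdim R p M = (⊤ : WithBot ℕ∞)}

/-- The infinite projective dimension locus of a collection of modules. -/
def IPDcat (𝒳 : Set (ModuleCat.{u} R)) : Set (PrimeSpectrum R) :=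
  ⋃ M ∈ 𝒳, IPD R M

/-- The modules in `mod R` whose infinite projective dimension locus lies in `W`. -/
def IPDinv (W : Set (PrimeSpectrum R)) : Set (ModuleCat.{u} R) :=
  {M | Module.Finite R M ∧ IPD R M ⊆ W}

/-- A specialization closed subset of `Spec R`. -/
def SpecClosed (W : Set (PrimeSpectrum R)) : Prop :=
  ∀ p ∈ W, ∀ q : PrimeSpectrum R, p.asIdeal ≤ q.asIdeal → q ∈ W

/-- Membership in `add 𝒳_p`: direct summands of localizations of finite direct sums
of members of `𝒳`. -/
def memAddLocal (𝒳 : Set (ModuleCat.{u} R)) (p : PrimeSpectrum R)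
    (N : ModuleCat.{u} (Localization.AtPrime p.asIdeal)) : Prop :=
  ∃ (n : ℕ) (X : Fin n → ModuleCat.{u} R), (∀ i, X i ∈ 𝒳) ∧
    ∃ (N' : ModuleCat.{u} (Localization.AtPrime p.asIdeal)),
      Nonempty ((↥N × ↥N') ≃ₗ[Localization.AtPrime p.asIdeal]
        ((i : Fin n) → LocalizedModule p.asIdeal.primeCompl (X i)))

/-- `K` is an `n`-th syzygy of `M` computed from a minimal free resolution over the
local ring `S`. -/
def IsMinSyz (S : Type u) [CommRing S] [IsLocalRing S] :
    ℕ → ModuleCat.{u} S → ModuleCat.{u} S → Prop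
  | 0, M, K => Nonempty (K ≃ₗ[S] M)
  | n+1, M, K => ∃ (F : ModuleCat.{u} S) (g : F →ₗ[S] M) (K' : ModuleCat.{u} S)
      (i : K' →ₗ[S] F),
      Module.Finite S F ∧ Module.Free S F ∧ Function.Surjective g ∧
      (LinearMap.ker g ≤ (IsLocalRing.maximalIdeal S) • (⊤ : Submodule S F)) ∧
      Function.Injective i ∧ LinearMap.range i = LinearMap.ker g ∧
      IsMinSyz S n K' K

/-- `K` is an `n`-th syzygy of `M` in some projective resolution (over any ring). -/
def IsSyz : ℕ → ModuleCat.{u} R → ModuleCat.{u} R → Prop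
  | 0, M, K => Nonempty (K ≃ₗ[R] M)
  | n+1, M, K => ∃ (F : ModuleCat.{u} R) (g : F →ₗ[R] M) (K' : ModuleCat.{u} R)
      (i : K' →ₗ[R] F),
      Module.Finite R F ∧ Module.Projective R F ∧ Function.Surjective g ∧
      Function.Injective i ∧ LinearMap.range i = LinearMap.ker g ∧
      IsSyz n K' K

/-- `T` is (isomorphic to) the Auslander transpose of `M`, computed from a minimal
free presentation over the local ring `S`. -/
def IsTranspose (S : Type u) [CommRing S] [IsLocalRing S] (M T : ModuleCat.{u} S) : Prop :=
  ∃ (F1 F0 : ModuleCat.{u} S) (d : F1 →ₗ[S] F0) (e : F0 →ₗ[S] M),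
    Module.Finite S F0 ∧ Module.Free S F0 ∧ Module.Finite S F1 ∧ Module.Free S F1 ∧
    Function.Surjective e ∧ LinearMap.range d = LinearMap.ker e ∧
    LinearMap.ker e ≤ (IsLocalRing.maximalIdeal S) • (⊤ : Submodule S F0) ∧
    LinearMap.ker d ≤ (IsLocalRing.maximalIdeal S) • (⊤ : Submodule S F1) ∧
    Nonempty (T ≃ₗ[S] ((Module.Dual S F1) ⧸ LinearMap.range d.dualMap))

/-- `T` is (isomorphic to) `Tr Ω^n M` over the local ring `S`. -/
def IsTrOmega (S : Type u) [CommRing S] [IsLocalRing S] (n : ℕ) (M T : ModuleCat.{u} S) :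
    Prop :=
  ∃ K : ModuleCat.{u} S, IsMinSyz S n M K ∧ IsTranspose S K T

/-- Resolving subcategory `𝒳` is dominant on `W ⊆ Spec R`. -/
def DominantOn (𝒳 : Set (ModuleCat.{u} R)) (W : Set (PrimeSpectrum R)) : Prop :=
  ∀ p ∈ W, ∃ (n : ℕ) (K : ModuleCat.{u} (Localization.AtPrime p.asIdeal)),
    IsMinSyz (Localization.AtPrime p.asIdeal) n
      (ModuleCat.of (Localization.AtPrime p.asIdeal)
        (IsLocalRing.ResidueField (Localization.AtPrime p.asIdeal))) K ∧
    memAddLocal R 𝒳 p K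

/-- Dominant resolving subcategory. -/
def Dominant (𝒳 : Set (ModuleCat.{u} R)) : Prop := DominantOn R 𝒳 Set.univ

/-- A (noetherian) local ring is Cohen-Macaulay if its depth equals its Krull dimension. -/
def IsCMLocalRing (S : Type u) [CommRing S] [IsLocalRing S] : Prop :=
  IsNoetherianRing S ∧
    ((depthE S (IsLocalRing.maximalIdeal S) S : WithBot ℕ∞) = ringKrullDim S)

/-- A regular local ring: a noetherian local ring whose maximal ideal is generated by
`dim S` elements. -/
def IsRegLocalRing (S : Type u) [CommRing S] [IsLocalRing S] : Prop :=
  IsNoetherianRing S ∧ ∃ s : Finset S,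
    Ideal.span (s : Set S) = IsLocalRing.maximalIdeal S ∧
    ringKrullDim S = (s.card : WithBot ℕ∞)

/-- The singular locus of `R`. -/
def SingLocus : Set (PrimeSpectrum R) :=
  {p | ¬ IsRegLocalRing (Localization.AtPrime p.asIdeal)}

/-- A hypersurface local ring: the completion is a quotient of a regular local ring by
one element. -/
def IsHypersurfaceLocalRing (S : Type u) [CommRing S] [IsLocalRing S] : Prop :=
  ∃ (T : Type u) (_ : CommRing T) (_ : IsLocalRing T) (f : T),
    IsRegLocalRing T ∧
    Nonempty ((AdicCompletion (IsLocalRing.maximalIdeal S) S) ≃+* (T ⧸ Ideal.span {f}))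

/-- A complete intersection local ring: the completion is a quotient of a regular local
ring by a regular sequence. -/
def IsCompleteIntersectionLocalRing (S : Type u) [CommRing S] [IsLocalRing S] : Prop :=
  ∃ (T : Type u) (_ : CommRing T) (_ : IsLocalRing T) (rs : List T),
    IsRegLocalRing T ∧ RingTheory.Sequence.IsRegular T rs ∧
    Nonempty ((AdicCompletion (IsLocalRing.maximalIdeal S) S) ≃+*
      (T ⧸ Ideal.ofList rs))

/-- The subquotient `A / (A ⊓ B)` of two submodules, used for homology. -/
def subquot {S M : Type u} [CommRing S] [AddCommGroup M] [Module S M]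
    (A B : Submodule S M) : Type u :=
  A ⧸ (B.comap A.subtype)

noncomputable instance {S M : Type u} [CommRing S] [AddCommGroup M] [Module S M]
    (A B : Submodule S M) : AddCommGroup (subquot A B) :=
  inferInstanceAs (AddCommGroup (A ⧸ (B.comap A.subtype)))

noncomputable instance {S M : Type u} [CommRing S] [AddCommGroup M] [Module S M]
    (A B : Submodule S M) : Module S (subquot A B) :=
  inferInstanceAs (Module S (A ⧸ (B.comap A.subtype)))

/-- `E` is (isomorphic to) `Ext^{j+1}_S(M, S)`, computed from a finite free resolution. -/
def IsExtPos (S : Type u) [CommRing S] (j : ℕ) (M E : ModuleCat.{u} S) : Prop :=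
  ∃ (F : ℕ → ModuleCat.{u} S) (d : ∀ i : ℕ, (F (i+1) : Type u) →ₗ[S] F i)
    (e : (F 0 : Type u) →ₗ[S] M),
    (∀ i, Module.Finite S (F i)) ∧ (∀ i, Module.Free S (F i)) ∧
    Function.Surjective e ∧ LinearMap.range (d 0) = LinearMap.ker e ∧
    (∀ i, LinearMap.range (d (i+1)) = LinearMap.ker (d i)) ∧
    Nonempty (E ≃ₗ[S]
      subquot (LinearMap.ker ((d (j+1)).dualMap)) (LinearMap.range ((d j).dualMap)))

/-- `T` is (isomorphic to) `Tor_n^S(M, N)`, computed from a projective resolution of `M`. -/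
def IsTor (S : Type u) [CommRing S] (n : ℕ) (M N T : ModuleCat.{u} S) : Prop :=
  ∃ (F : ℕ → ModuleCat.{u} S) (d : ∀ i : ℕ, (F (i+1) : Type u) →ₗ[S] F i)
    (e : (F 0 : Type u) →ₗ[S] M),
    (∀ i, Module.Projective S (F i)) ∧
    Function.Surjective e ∧ LinearMap.range (d 0) = LinearMap.ker e ∧
    (∀ i, LinearMap.range (d (i+1)) = LinearMap.ker (d i)) ∧
    (match n with
      | 0 => Nonempty (T ≃ₗ[S] TensorProduct S M N)
      | (j+1) => Nonempty (T ≃ₗ[S]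
          subquot (LinearMap.ker (LinearMap.rTensor (↥N) (d j)))
            (LinearMap.range (LinearMap.rTensor (↥N) (d (j+1))))))

/-- `idLE n M` : the injective dimension of `M` is at most `n`. -/
def idLE (S : Type u) [CommRing S] : ℕ → ModuleCat.{u} S → Prop
  | 0, M => Module.Injective S M
  | n+1, M => ∃ (I C : ModuleCat.{u} S) (f : M →ₗ[S] I) (g : I →ₗ[S] C),
      IsSES f g ∧ Module.Injective S I ∧ idLE S n C

/-- `PD_0^n(R)` over a local ring: modules of projective dimension at most `n` that are
free on the punctured spectrum. -/
def PD0n [IsLocalRing R] (n : ℕ) : Set (ModuleCat.{u} R) :=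
  {M | Module.Finite R M ∧ pdLE R n M ∧
    ∀ p : PrimeSpectrum R, p.asIdeal ≠ IsLocalRing.maximalIdeal R →
      Module.Free (Localization.AtPrime p.asIdeal) (LocalizedModule p.asIdeal.primeCompl M)}

/-- `PD_0(R)` over a local ring: modules of finite projective dimension that are
free on the punctured spectrum. -/
def PD0 [IsLocalRing R] : Set (ModuleCat.{u} R) :=
  {M | Module.Finite R M ∧ (∃ n : ℕ, pdLE R n M) ∧
    ∀ p : PrimeSpectrum R, p.asIdeal ≠ IsLocalRing.maximalIdeal R →
      Module.Free (Localization.AtPrime p.asIdeal) (LocalizedModule p.asIdeal.primeCompl M)}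

/-- The residue field of a local ring, as a bundled module. -/
noncomputable abbrev residueMod (S : Type u) [CommRing S] [IsLocalRing S] : ModuleCat.{u} S :=
  ModuleCat.of S (IsLocalRing.ResidueField S)


/-- `LPD(R)`: the modules which have finite projective dimension locally at every prime. -/
def LPDcat : Set (ModuleCat.{u} R) :=
  {M | Module.Finite R M ∧ ∀ p : PrimeSpectrum R, localPdim R p M ≠ (⊤ : WithBot ℕ∞)}

section Basics

variable {R}
variable {A B C D K L M N P Q X Y Z : Type u}
  [AddCommGroup A] [Module R A] [AddCommGroup B] [Module R B] [AddCommGroup C] [Module R C]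
  [AddCommGroup D] [Module R D] [AddCommGroup K] [Module R K] [AddCommGroup L] [Module R L]
  [AddCommGroup M] [Module R M] [AddCommGroup N] [Module R N] [AddCommGroup P] [Module R P]
  [AddCommGroup Q] [Module R Q] [AddCommGroup X] [Module R X] [AddCommGroup Y] [Module R Y]
  [AddCommGroup Z] [Module R Z]

/-- Unbundled membership. -/
abbrev Mem (𝒳 : Set (ModuleCat.{u} R)) (M : Type u) [AddCommGroup M] [Module R M] : Prop :=
  ModuleCat.of R M ∈ 𝒳

/-- Multiplication by `s` on `M` factors through an object of `𝒳`. -/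
def Fac (𝒳 : Set (ModuleCat.{u} R)) (s : R) (M : Type u) [AddCommGroup M] [Module R M] : Prop :=
  ∃ X : ModuleCat.{u} R, X ∈ 𝒳 ∧ ∃ (f : M →ₗ[R] X) (g : X →ₗ[R] M), ∀ m, g (f m) = s • m

theorem IsSES.comp_zero {f : A →ₗ[R] B} {g : B →ₗ[R] C} (h : IsSES f g) (a : A) :
    g (f a) = 0 := by
  have : f a ∈ LinearMap.ker g := h.2.2 ▸ ⟨a, rfl⟩
  exact this

theorem IsSES.lift {f : A →ₗ[R] B} {g : B →ₗ[R] C} (h : IsSES f g) (b : B) (hb : g b = 0) :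
    ∃ a, f a = b := by
  have : b ∈ LinearMap.range f := h.2.2 ▸ hb
  exact this

theorem IsSES.mk' {f : A →ₗ[R] B} {g : B →ₗ[R] C} (h1 : Function.Injective f)
    (h2 : Function.Surjective g) (h3 : ∀ a, g (f a) = 0) (h4 : ∀ b, g b = 0 → ∃ a, f a = b) :
    IsSES f g := by
  refine ⟨h1, h2, le_antisymm ?_ ?_⟩
  · rintro _ ⟨a, rfl⟩; exact h3 a
  · intro b hb; exact h4 b hb

theorem isSES_ker (g : B →ₗ[R] C) (hg : Function.Surjective g) :
    IsSES (LinearMap.ker g).subtype g :=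
  ⟨Subtype.val_injective, hg, by simp⟩

/-- Lift a map into the middle with zero composite through the kernel. -/
theorem IsSES.liftMap {f : A →ₗ[R] B} {g : B →ₗ[R] C} (h : IsSES f g) (k : D →ₗ[R] B)
    (hk : ∀ d, g (k d) = 0) : ∃ l : D →ₗ[R] A, ∀ d, f (l d) = k d := by
  have hr : ∀ d, k d ∈ LinearMap.range f := fun d => h.2.2 ▸ (hk d)
  let e := LinearEquiv.ofInjective f h.1
  refine ⟨e.symm.toLinearMap ∘ₗ LinearMap.codRestrict _ k hr, fun d => ?_⟩
  have := LinearEquiv.apply_symm_apply e ⟨k d, hr d⟩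
  exact congrArg Subtype.val this

/-- Descend a map killing the kernel. -/
theorem IsSES.descMap {f : A →ₗ[R] B} {g : B →ₗ[R] C} (h : IsSES f g) (k : B →ₗ[R] D)
    (hk : ∀ a, k (f a) = 0) : ∃ l : C →ₗ[R] D, ∀ b, l (g b) = k b := by
  have hker : LinearMap.ker g ≤ LinearMap.ker k := by
    intro b hb
    obtain ⟨a, rfl⟩ := h.lift b hb
    exact hk a
  let e := LinearMap.quotKerEquivOfSurjective g h.2.1
  refine ⟨(LinearMap.ker g).liftQ k hker ∘ₗ e.symm.toLinearMap, fun b => ?_⟩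
  have : e.symm (g b) = (LinearMap.ker g).mkQ b := by
    rw [LinearEquiv.symm_apply_eq]; rfl
  simp [this]

theorem exists_free_ses (M : Type u) [AddCommGroup M] [Module R M] [Module.Finite R M] :
    ∃ (n : ℕ) (g : (Fin n → R) →ₗ[R] M), IsSES (LinearMap.ker g).subtype g := by
  obtain ⟨n, g, hg⟩ := Module.Finite.exists_fin' R M
  exact ⟨n, g, isSES_ker g hg⟩

theorem isSES_prod : IsSES (LinearMap.inl R A B) (LinearMap.snd R A B) :=
  IsSES.mk' LinearMap.inl_injective LinearMap.snd_surjective (by simp)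
    (fun b hb => ⟨b.1, by ext <;> simp_all⟩)

/-- The pullback module. -/
abbrev PB (f : A →ₗ[R] C) (g : B →ₗ[R] C) : Type u :=
  ↥(LinearMap.ker (f ∘ₗ LinearMap.fst R A B - g ∘ₗ LinearMap.snd R A B))

theorem PB.mem {f : A →ₗ[R] C} {g : B →ₗ[R] C} (z : PB f g) : f z.1.1 = g z.1.2 := by
  have h := LinearMap.mem_ker.1 z.2
  exact sub_eq_zero.1 h

/-- Constructor for elements of pullbacks. -/
def PB.mk {f : A →ₗ[R] C} {g : B →ₗ[R] C} (a : A) (b : B) (h : f a = g b) : PB f g :=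
  ⟨(a, b), by simp [h]⟩

/-- First projection. -/
abbrev PB.fst (f : A →ₗ[R] C) (g : B →ₗ[R] C) : PB f g →ₗ[R] A :=
  LinearMap.fst R A B ∘ₗ Submodule.subtype _
/-- Second projection. -/
abbrev PB.snd (f : A →ₗ[R] C) (g : B →ₗ[R] C) : PB f g →ₗ[R] B :=
  LinearMap.snd R A B ∘ₗ Submodule.subtype _
/-- Map into the pullback. -/
def PB.lift (f : A →ₗ[R] C) (g : B →ₗ[R] C) (a : D →ₗ[R] A) (b : D →ₗ[R] B)
    (h : ∀ d, f (a d) = g (b d)) : D →ₗ[R] PB f g :=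
  LinearMap.codRestrict _ (a.prod b) (fun d => by simp [h d])

@[simp] theorem PB.lift_val (f : A →ₗ[R] C) (g : B →ₗ[R] C) (a : D →ₗ[R] A) (b : D →ₗ[R] B)
    (h : ∀ d, f (a d) = g (b d)) (d : D) : (PB.lift f g a b h d).1 = (a d, b d) := rfl

/-- Pullback of a short exact sequence `0 → K → A → C → 0` along `g : B → C`. -/
theorem isSES_PB {i : K →ₗ[R] A} {f : A →ₗ[R] C} (h : IsSES i f) (g : B →ₗ[R] C) :
    IsSES (PB.lift f g i 0 (by simp [h.comp_zero])) (PB.snd f g) := by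
  refine IsSES.mk' ?_ ?_ ?_ ?_
  · intro a b hab
    have := congrArg (fun z => z.1.1) hab
    exact h.1 (by simpa using this)
  · intro b
    obtain ⟨a, ha⟩ := h.2.1 (g b)
    exact ⟨PB.mk a b ha, rfl⟩
  · intro a; simp
  · intro z hz
    have h2 : z.1.2 = 0 := hz
    have h1 : f z.1.1 = 0 := by rw [z.mem, h2, map_zero]
    obtain ⟨k, hk⟩ := h.lift _ h1
    exact ⟨k, Subtype.ext (Prod.ext hk h2.symm)⟩

/-- The pushout module of `f : C → A` and `g : C → B`. -/
abbrev PO (f : C →ₗ[R] A) (g : C →ₗ[R] B) : Type u :=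
  (A × B) ⧸ LinearMap.range (f.prod (-g))

/-- Left injection. -/
abbrev PO.inl (f : C →ₗ[R] A) (g : C →ₗ[R] B) : A →ₗ[R] PO f g :=
  Submodule.mkQ _ ∘ₗ LinearMap.inl R A B
/-- Right injection. -/
abbrev PO.inr (f : C →ₗ[R] A) (g : C →ₗ[R] B) : B →ₗ[R] PO f g :=
  Submodule.mkQ _ ∘ₗ LinearMap.inr R A B
/-- Descent. -/
def PO.desc (f : C →ₗ[R] A) (g : C →ₗ[R] B) (a : A →ₗ[R] D) (b : B →ₗ[R] D)
    (h : ∀ c, a (f c) = b (g c)) : PO f g →ₗ[R] D :=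
  Submodule.liftQ _ (a.coprod b) (by rintro _ ⟨c, rfl⟩; simp [h c])

@[simp] theorem PO.desc_mk (f : C →ₗ[R] A) (g : C →ₗ[R] B) (a : A →ₗ[R] D) (b : B →ₗ[R] D)
    (h : ∀ c, a (f c) = b (g c)) (x : A) (y : B) :
    PO.desc f g a b h (Submodule.Quotient.mk (x, y)) = a x + b y := by
  simp [PO.desc]

theorem PO.glue (f : C →ₗ[R] A) (g : C →ₗ[R] B) (c : C) :
    PO.inl f g (f c) = PO.inr f g (g c) := by
  simp only [PO.inl, PO.inr, LinearMap.comp_apply, Submodule.mkQ_apply]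
  rw [Submodule.Quotient.eq]
  exact ⟨c, by simp⟩

/-- Pushout of a short exact sequence `0 → C → B → N → 0` along `f : C → A`. -/
theorem isSES_PO {g : C →ₗ[R] B} {π : B →ₗ[R] N} (h : IsSES g π) (f : C →ₗ[R] A) :
    IsSES (PO.inl f g) (PO.desc f g 0 π (by simp [h.comp_zero])) := by
  refine IsSES.mk' ?_ ?_ ?_ ?_
  · rw [injective_iff_map_eq_zero]
    intro a ha
    simp only [PO.inl, LinearMap.comp_apply, Submodule.mkQ_apply] at ha
    rw [Submodule.Quotient.mk_eq_zero] at ha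
    obtain ⟨c, hc⟩ := ha
    have h2 := congrArg Prod.snd hc
    have h1 := congrArg Prod.fst hc
    simp at h1 h2
    have : c = 0 := h.1 (by simpa using h2)
    simpa [this] using h1.symm
  · intro n
    obtain ⟨b, rfl⟩ := h.2.1 n
    exact ⟨Submodule.Quotient.mk (0, b), by simp⟩
  · intro a
    simp only [PO.inl, LinearMap.comp_apply, Submodule.mkQ_apply, LinearMap.inl_apply]
    simp
  · intro z hz
    obtain ⟨⟨a, b⟩, rfl⟩ := Submodule.Quotient.mk_surjective _ z
    simp at hz
    obtain ⟨c, rfl⟩ := h.lift _ hz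
    refine ⟨a + f c, ?_⟩
    simp only [PO.inl, LinearMap.comp_apply, Submodule.mkQ_apply, LinearMap.inl_apply]
    rw [Submodule.Quotient.eq]
    exact ⟨c, by simp⟩

variable {𝒳 : Set (ModuleCat.{u} R)}

theorem mem_iso (h : IsResolving R 𝒳) (e : M ≃ₗ[R] N) (hM : Mem 𝒳 M) : Mem 𝒳 N :=
  h.iso_closed _ _ ⟨e⟩ hM

theorem mem_proj (h : IsResolving R 𝒳) [Module.Finite R M] [Module.Projective R M] : Mem 𝒳 M :=
  h.proj_mem (ModuleCat.of R M) ‹_› ‹_›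

theorem mem_ext (h : IsResolving R 𝒳) {f : A →ₗ[R] B} {g : B →ₗ[R] C} (hs : IsSES f g)
    (hA : Mem 𝒳 A) (hC : Mem 𝒳 C) : Mem 𝒳 B :=
  h.ext_closed (ModuleCat.of R A) (ModuleCat.of R B) (ModuleCat.of R C) f g hs hA hC

theorem mem_prod (h : IsResolving R 𝒳) (hA : Mem 𝒳 A) (hC : Mem 𝒳 C) : Mem 𝒳 (A × C) :=
  mem_ext h isSES_prod hA hC

theorem mem_fst (h : IsResolving R 𝒳) (hA : Mem 𝒳 (A × C)) : Mem 𝒳 A :=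
  h.summand_closed (ModuleCat.of R A) (ModuleCat.of R C) hA

theorem mem_retract (h : IsResolving R 𝒳) (i : M →ₗ[R] X) (r : X →ₗ[R] M)
    (hir : ∀ m, r (i m) = m) (hX : Mem 𝒳 X) : Mem 𝒳 M := by
  let e : X ≃ₗ[R] M × LinearMap.ker r :=
    LinearEquiv.ofLinearMap (r.prod (LinearMap.codRestrict _ (LinearMap.id - i ∘ₗ r)
      (by intro x; simp [hir]))) (i.coprod (Submodule.subtype _))
      (by
        ext m
        · simp [hir]
        · simp [hir]
        · simp
        · simp [show r m.1 = 0 from m.2])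
      (by ext x; simp)
  exact mem_fst h (mem_iso h e hX)

theorem mem_syz [IsNoetherianRing R] (h : IsResolving R 𝒳) {f : K →ₗ[R] P} {g : P →ₗ[R] M}
    (hs : IsSES f g) [Module.Finite R P] [Module.Projective R P] (hM : Mem 𝒳 M) : Mem 𝒳 K :=
  h.syzygy_closed (ModuleCat.of R K) (ModuleCat.of R P) (ModuleCat.of R M) f g hs
    (Module.Finite.of_injective f hs.1) ‹_› ‹_› hM

theorem mem_ker [IsNoetherianRing R] (h : IsResolving R 𝒳) {f : A →ₗ[R] B} {g : B →ₗ[R] C}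
    (hs : IsSES f g) (hB : Mem 𝒳 B) (hC : Mem 𝒳 C) : Mem 𝒳 A := by
  haveI : Module.Finite R C := h.fg _ hC
  obtain ⟨n, π, hπ⟩ := exists_free_ses (R := R) C
  have hK := mem_syz h hπ hC
  have hQ : Mem 𝒳 (PB π g) := mem_ext h (isSES_PB hπ g) hK hB
  obtain ⟨σ, hσ⟩ := Module.projective_lifting_property g π hs.2.1
  have hσ' : ∀ x, g (σ x) = π x := fun x => LinearMap.congr_fun hσ x
  obtain ⟨r, hr⟩ := hs.liftMap (PB.snd π g - σ ∘ₗ PB.fst π g) (by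
    intro z; simp [hσ', z.mem])
  refine mem_retract h (PB.lift π g 0 f (by simp [hs.comp_zero])) r ?_ hQ
  intro a
  apply hs.1
  rw [hr]; simp

theorem fac_of_mem (hM : Mem 𝒳 M) (s : R) : Fac 𝒳 s M :=
  ⟨ModuleCat.of R M, hM, s • LinearMap.id, LinearMap.id, by simp⟩

/-- The ideal of elements factoring through `𝒳`. -/
def facIdeal (h : IsResolving R 𝒳) (M : Type u) [AddCommGroup M] [Module R M] : Ideal R where
  carrier := {s | Fac 𝒳 s M}
  add_mem' := by
    rintro s t ⟨X, hX, f, g, hfg⟩ ⟨Y, hY, f', g', hfg'⟩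
    refine ⟨ModuleCat.of R (X × Y), mem_prod h hX hY, f.prod f', g.coprod g', ?_⟩
    intro m; simp [hfg, hfg', add_smul]
  zero_mem' := ⟨ModuleCat.of R PUnit, mem_proj h, 0, 0, by simp⟩
  smul_mem' := by
    rintro c s ⟨X, hX, f, g, hfg⟩
    exact ⟨X, hX, f, c • g, by intro m; simp [hfg, mul_smul]⟩

theorem mem_facIdeal (h : IsResolving R 𝒳) (s : R) : s ∈ facIdeal h M ↔ Fac 𝒳 s M := Iff.rfl

theorem mem_of_fac_one (h : IsResolving R 𝒳) (h1 : Fac 𝒳 1 M) : Mem 𝒳 M := by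
  obtain ⟨X, hX, f, g, hfg⟩ := h1
  exact mem_retract h f g (by simpa using hfg) hX

/-- Core of the extension argument. -/
theorem ext_fac {i : A →ₗ[R] B} {π : B →ₗ[R] C} (hs : IsSES i π) {a c : R}
    {f : A →ₗ[R] X} {g : X →ₗ[R] A} (hfg : ∀ m, g (f m) = a • m)
    {f' : C →ₗ[R] Y} {g' : Y →ₗ[R] C} (hfg' : ∀ m, g' (f' m) = c • m) :
    ∃ (Q : ModuleCat.{u} R) (i' : X →ₗ[R] Q) (π' : Q →ₗ[R] Y) (_ : IsSES i' π')
      (F : B →ₗ[R] Q) (G : Q →ₗ[R] B), ∀ b, G (F b) = (a * c) • b := by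
  -- pull back along g'
  have h1 := isSES_PB hs g'
  let j := PB.lift π g' i 0 (by simp [hs.comp_zero])
  let F1 : B →ₗ[R] PB π g' := PB.lift π g' (c • LinearMap.id) (f' ∘ₗ π) (by
    intro b; simp [hfg'])
  have h2 := isSES_PO h1 f
  -- G2 : PO → PB with composite a
  let r : PB π g' →ₗ[R] PB π g' := a • LinearMap.id
  let G2 : PO f j →ₗ[R] PB π g' := PO.desc f j (j ∘ₗ g) r (by
    intro m; simp [hfg, r])
  refine ⟨ModuleCat.of R (PO f j), _, _, h2, PO.inr f j ∘ₗ F1, PB.fst π g' ∘ₗ G2, ?_⟩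
  intro b
  have : G2 (PO.inr f j (F1 b)) = a • F1 b := by
    simp only [PO.inr, LinearMap.comp_apply, Submodule.mkQ_apply, LinearMap.inr_apply]
    simp only [G2, PO.desc_mk]
    simp [r]
  simp only [LinearMap.comp_apply] at this ⊢
  rw [this]
  simp [F1, mul_smul]

theorem fac_ext (h : IsResolving R 𝒳) {i : A →ₗ[R] B} {π : B →ₗ[R] C} (hs : IsSES i π) {a c : R}
    (ha : Fac 𝒳 a A) (hc : Fac 𝒳 c C) : Fac 𝒳 (a * c) B := by
  obtain ⟨X, hX, f, g, hfg⟩ := ha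
  obtain ⟨Y, hY, f', g', hfg'⟩ := hc
  obtain ⟨Q, i', π', hQ, F, G, hFG⟩ := ext_fac hs hfg hfg'
  exact ⟨Q, mem_ext h hQ hX hY, F, G, hFG⟩

/-- Core of the syzygy argument. -/
theorem syz_fac {i : K →ₗ[R] P} {π : P →ₗ[R] M} (hs : IsSES i π) [Module.Projective R P]
    {j : L →ₗ[R] Q} {ρ : Q →ₗ[R] X} (ht : IsSES j ρ) [Module.Projective R Q] {s : R}
    {f : M →ₗ[R] X} {g : X →ₗ[R] M} (hfg : ∀ m, g (f m) = s • m) :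
    ∃ (F : K →ₗ[R] L × P) (G : L × P →ₗ[R] K), ∀ k, G (F k) = s • k := by
  obtain ⟨F, hF⟩ := Module.projective_lifting_property ρ (f ∘ₗ π) ht.2.1
  obtain ⟨G, hG⟩ := Module.projective_lifting_property π (g ∘ₗ ρ) hs.2.1
  replace hF : ∀ x, ρ (F x) = f (π x) := fun x => LinearMap.congr_fun hF x
  replace hG : ∀ x, π (G x) = g (ρ x) := fun x => LinearMap.congr_fun hG x
  obtain ⟨F', hF'⟩ := ht.liftMap (F ∘ₗ i) (by intro k; simp [hF, hs.comp_zero])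
  obtain ⟨G', hG'⟩ := hs.liftMap (G ∘ₗ j) (by intro k; simp [hG, ht.comp_zero])
  obtain ⟨H, hH⟩ := hs.liftMap (s • LinearMap.id - G ∘ₗ F) (by
    intro x; simp [hG, hF, hfg])
  refine ⟨F'.prod i, G'.coprod H, fun k => hs.1 ?_⟩
  simp [hG', hF', hH]

theorem fac_syz [IsNoetherianRing R] (h : IsResolving R 𝒳) {i : K →ₗ[R] P} {π : P →ₗ[R] M}
    (hs : IsSES i π)
    [Module.Projective R P] [Module.Finite R P] {s : R} (hM : Fac 𝒳 s M) : Fac 𝒳 s K := by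
  obtain ⟨X, hX, f, g, hfg⟩ := hM
  haveI : Module.Finite R X := h.fg _ hX
  obtain ⟨n, ρ, hρ⟩ := exists_free_ses (R := R) X
  have hL := mem_syz h hρ hX
  obtain ⟨F, G, hFG⟩ := syz_fac hs hρ hfg
  exact ⟨ModuleCat.of R (_ × P), mem_prod h hL (mem_proj h), F, G, hFG⟩

/-- Lemma A. -/
theorem mem_of_PB_mem (h : IsResolving R 𝒳) {i : K →ₗ[R] P} {π : P →ₗ[R] M}
    (hs : IsSES i π) {x : R} (hx : Fac 𝒳 x M)
    (hB : Mem 𝒳 (PB π (x • LinearMap.id : M →ₗ[R] M))) : Mem 𝒳 M := by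
  obtain ⟨X, hX, f, g, hfg⟩ := hx
  let B := PB π (x • LinearMap.id : M →ₗ[R] M)
  let a : B →ₗ[R] M × PB π g := (PB.snd _ _).prod
    (PB.lift π g (PB.fst _ _) (f ∘ₗ PB.snd _ _) (by intro b; simp [hfg, b.mem]))
  let b : M × PB π g →ₗ[R] X := f.coprod (-PB.snd π g)
  have hab : IsSES a b := by
    refine IsSES.mk' ?_ ?_ ?_ ?_
    · intro y z hyz
      have h1 := congrArg (fun t => t.1) hyz
      have h2 := congrArg (fun t => t.2.1.1) hyz
      exact Subtype.ext (Prod.ext h2 h1)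
    · intro y
      obtain ⟨p, hp⟩ := hs.2.1 (g y)
      exact ⟨(0, -PB.mk p y hp), by simp [b, PB.mk]⟩
    · intro y; simp [a, b]
    · rintro ⟨m, z⟩ hz
      have hz' : f m = z.1.2 := by simpa [b, ← sub_eq_add_neg, sub_eq_zero] using hz
      refine ⟨PB.mk z.1.1 m (by rw [z.mem, ← hz', hfg]; rfl), ?_⟩
      refine Prod.ext rfl (Subtype.ext (Prod.ext rfl hz'))
  exact mem_fst h (mem_ext h hab hB hX)

end Basics

section ExtWrap

open CategoryTheory.Abelian

variable {R}
variable {A B C D K L M N P Q X Y Z : Type u}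
  [AddCommGroup A] [Module R A] [AddCommGroup B] [Module R B] [AddCommGroup C] [Module R C]
  [AddCommGroup D] [Module R D] [AddCommGroup K] [Module R K] [AddCommGroup L] [Module R L]
  [AddCommGroup M] [Module R M] [AddCommGroup N] [Module R N] [AddCommGroup P] [Module R P]
  [AddCommGroup Q] [Module R Q] [AddCommGroup X] [Module R X] [AddCommGroup Y] [Module R Y]
  [AddCommGroup Z] [Module R Z]
variable {j : ℕ}

/-- Ext modules, unbundled. -/
abbrev E (R : Type u) [CommRing R] (A Y : Type u) [AddCommGroup A] [Module R A] [AddCommGroup Y]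
    [Module R Y] (j : ℕ) : Type u := Ext (ModuleCat.of R A) (ModuleCat.of R Y) j

/-- Contravariant functoriality. -/
noncomputable def pull (f : A →ₗ[R] B) : E R B Y j →ₗ[R] E R A Y j where
  toFun x := (Ext.mk₀ (ModuleCat.ofHom f)).comp x (zero_add j)
  map_add' x y := Ext.comp_add _ _ _ _
  map_smul' r x := Ext.comp_smul _ _ _ _

/-- Covariant functoriality. -/
noncomputable def push (f : A →ₗ[R] B) : E R Z A j →ₗ[R] E R Z B j where
  toFun x := x.comp (Ext.mk₀ (ModuleCat.ofHom f)) (add_zero j)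
  map_add' x y := Ext.add_comp _ _ _ _
  map_smul' r x := Ext.smul_comp _ _ _ _

/-- The short complex of an `IsSES`. -/
abbrev IsSES.sc {f : A →ₗ[R] B} {g : B →ₗ[R] C} (h : IsSES f g) : ShortComplex (ModuleCat.{u} R) :=
  ShortComplex.mk (ModuleCat.ofHom f) (ModuleCat.ofHom g) (by
    ext a; exact h.comp_zero a)

theorem IsSES.se {f : A →ₗ[R] B} {g : B →ₗ[R] C} (h : IsSES f g) : h.sc.ShortExact := by
  haveI : Mono h.sc.f := (ModuleCat.mono_iff_injective _).2 h.1
  haveI : Epi h.sc.g := (ModuleCat.epi_iff_surjective _).2 h.2.1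
  exact ShortComplex.ShortExact.mk
    ((ShortComplex.moduleCat_exact_iff _).2 (fun b hb => h.lift b hb))

/-- Connecting map, contravariant. -/
noncomputable def dl {f : A →ₗ[R] B} {g : B →ₗ[R] C} (h : IsSES f g) :
    E R A Y j →ₗ[R] E R C Y (j+1) where
  toFun x := h.se.extClass.comp x (add_comm 1 j)
  map_add' x y := Ext.comp_add _ _ _ _
  map_smul' r x := Ext.comp_smul _ _ _ _

/-- Connecting map, covariant. -/
noncomputable def cn {f : A →ₗ[R] B} {g : B →ₗ[R] C} (h : IsSES f g) :
    E R Z C j →ₗ[R] E R Z A (j+1) where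
  toFun x := x.comp h.se.extClass rfl
  map_add' x y := Ext.add_comp _ _ _ _
  map_smul' r x := Ext.smul_comp _ _ _ _

theorem pull_comp (f : A →ₗ[R] B) (g : B →ₗ[R] C) (x : E R C Y j) :
    pull (g ∘ₗ f) x = pull f (pull g x) := by
  simp [pull, ModuleCat.ofHom_comp]

theorem pull_id (x : E R A Y j) : pull (LinearMap.id : A →ₗ[R] A) x = x := by
  simp [pull]

theorem pull_add (f g : A →ₗ[R] B) (x : E R B Y j) : pull (f + g) x = pull f x + pull g x := by
  simp [pull, ModuleCat.ofHom_add, Ext.mk₀_add]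

theorem pull_zero (x : E R B Y j) : pull (0 : A →ₗ[R] B) x = 0 := by
  have := pull_add (0 : A →ₗ[R] B) 0 x
  simpa using this

theorem ofHom_smul' (r : R) (f : A →ₗ[R] B) :
    ModuleCat.ofHom (r • f) = r • ModuleCat.ofHom f := rfl

theorem pull_smul (r : R) (f : A →ₗ[R] B) (x : E R B Y j) :
    pull (r • f) x = r • pull f x := by
  change (Ext.mk₀ (ModuleCat.ofHom (r • f))).comp x (zero_add j) = _
  rw [ofHom_smul', Ext.mk₀_smul, Ext.smul_comp]; rfl

theorem push_comp (f : A →ₗ[R] B) (g : B →ₗ[R] C) (x : E R Z A j) :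
    push (g ∘ₗ f) x = push g (push f x) := by
  simp only [push, LinearMap.coe_mk, AddHom.coe_mk, ModuleCat.ofHom_comp]
  rw [Ext.comp_assoc_of_third_deg_zero, Ext.mk₀_comp_mk₀]

theorem push_id (x : E R Z A j) : push (LinearMap.id : A →ₗ[R] A) x = x := by
  simp [push]

theorem push_add (f g : A →ₗ[R] B) (x : E R Z A j) : push (f + g) x = push f x + push g x := by
  simp [push, ModuleCat.ofHom_add, Ext.mk₀_add]

theorem push_zero (x : E R Z A j) : push (0 : A →ₗ[R] B) x = 0 := by
  have := push_add (0 : A →ₗ[R] B) 0 x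
  simpa using this

theorem push_smul (r : R) (f : A →ₗ[R] B) (x : E R Z A j) :
    push (r • f) x = r • push f x := by
  change x.comp (Ext.mk₀ (ModuleCat.ofHom (r • f))) (add_zero j) = _
  rw [ofHom_smul', Ext.mk₀_smul, Ext.comp_smul]; rfl

theorem push_sum {ι : Type*} (s : Finset ι) (f : ι → (A →ₗ[R] B)) (x : E R Z A j) :
    push (∑ i ∈ s, f i) x = ∑ i ∈ s, push (f i) x := by
  classical
  induction s using Finset.induction_on with
  | empty => simpa using push_zero x
  | insert a s ha ih => rw [Finset.sum_insert ha, Finset.sum_insert ha, push_add, ih]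

theorem pull_push (f : A →ₗ[R] B) (g : Y →ₗ[R] Z) (x : E R B Y j) :
    pull f (push g x) = push g (pull f x) := by
  simp only [push, pull, LinearMap.coe_mk, AddHom.coe_mk]
  rw [Ext.comp_assoc_of_third_deg_zero]

section
variable {f : A →ₗ[R] B} {g : B →ₗ[R] C}

theorem pull_pull (h : IsSES f g) (x : E R C Y j) : pull f (pull g x) = 0 := by
  rw [← pull_comp]
  have : g ∘ₗ f = 0 := LinearMap.ext h.comp_zero
  rw [this, pull_zero]

theorem dl_pull (h : IsSES f g) (x : E R B Y j) : dl h (pull f x) = 0 :=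
  h.se.extClass_comp_assoc x (h := add_comm 1 j)

theorem pull_dl (h : IsSES f g) (x : E R A Y j) : pull g (dl h x) = 0 :=
  h.se.comp_extClass_assoc x (add_comm 1 j)

theorem ex1 (h : IsSES f g) (x : E R A Y j) (hx : dl h x = 0) : ∃ y : E R B Y j, pull f y = x :=
  Ext.contravariant_sequence_exact₁ h.se _ x (add_comm 1 j) hx

theorem ex2 (h : IsSES f g) (x : E R B Y j) (hx : pull f x = 0) : ∃ y : E R C Y j, pull g y = x :=
  Ext.contravariant_sequence_exact₂ h.se _ x hx

theorem ex3 (h : IsSES f g) (x : E R C Y (j+1)) (hx : pull g x = 0) : ∃ y : E R A Y j, dl h y = x :=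
  Ext.contravariant_sequence_exact₃ h.se _ x hx (add_comm 1 j)

theorem push_push (h : IsSES f g) (x : E R Z A j) : push g (push f x) = 0 := by
  rw [← push_comp]
  have : g ∘ₗ f = 0 := LinearMap.ext h.comp_zero
  rw [this, push_zero]

theorem coex1 (h : IsSES f g) (x : E R Z A (j+1)) (hx : push f x = 0) : ∃ y : E R Z C j, cn h y = x :=
  Ext.covariant_sequence_exact₁ _ h.se x hx rfl

theorem coex2 (h : IsSES f g) (x : E R Z B j) (hx : push g x = 0) : ∃ y : E R Z A j, push f y = x :=
  Ext.covariant_sequence_exact₂ _ h.se x hx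

theorem coex3 (h : IsSES f g) (x : E R Z C j) (hx : cn h x = 0) : ∃ y : E R Z B j, push g y = x :=
  Ext.covariant_sequence_exact₃ _ h.se x rfl hx

theorem push_cn (h : IsSES f g) (x : E R Z C j) : push f (cn h x) = 0 := by
  change (x.comp h.se.extClass rfl).comp (Ext.mk₀ h.sc.f) (add_zero (j+1)) = 0
  rw [Ext.comp_assoc_of_third_deg_zero, h.se.extClass_comp, Ext.comp_zero]

theorem cn_push (h : IsSES f g) (x : E R Z B j) : cn h (push g x) = 0 := by
  change (x.comp (Ext.mk₀ h.sc.g) (add_zero j)).comp h.se.extClass rfl = 0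
  rw [Ext.comp_assoc_of_second_deg_zero, h.se.comp_extClass, Ext.comp_zero]

variable {A' B' C' : Type u}
  [AddCommGroup A'] [Module R A'] [AddCommGroup B'] [Module R B'] [AddCommGroup C'] [Module R C']
  {f' : A' →ₗ[R] B'} {g' : B' →ₗ[R] C'}

theorem extClass_nat (h : IsSES f g) (h' : IsSES f' g') (a : A →ₗ[R] A') (b : B →ₗ[R] B')
    (c : C →ₗ[R] C') (h1 : ∀ x, b (f x) = f' (a x)) (h2 : ∀ x, c (g x) = g' (b x)) :
      h.se.extClass.comp (Ext.mk₀ (ModuleCat.ofHom a)) (add_zero 1) =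
      (Ext.mk₀ (ModuleCat.ofHom c)).comp h'.se.extClass (zero_add 1) :=
  h.se.extClass_naturality h'.se
    (ShortComplex.homMk (S₁ := h.sc) (S₂ := h'.sc)
     (ModuleCat.ofHom a) (ModuleCat.ofHom b) (ModuleCat.ofHom c)
     (by ext x; exact (h1 x).symm) (by ext x; exact (h2 x).symm))

theorem dl_nat (h : IsSES f g) (h' : IsSES f' g') (a : A →ₗ[R] A') (b : B →ₗ[R] B')
    (c : C →ₗ[R] C') (h1 : ∀ x, b (f x) = f' (a x)) (h2 : ∀ x, c (g x) = g' (b x))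
    (y : E R A' Y j) : dl h (pull a y) = pull c (dl h' y) := by
  have := extClass_nat h h' a b c h1 h2
  simp only [dl, pull, LinearMap.coe_mk, AddHom.coe_mk]
  rw [← Ext.comp_assoc_of_second_deg_zero, this, Ext.comp_assoc]
  omega

theorem cn_nat (h : IsSES f g) (h' : IsSES f' g') (a : A →ₗ[R] A') (b : B →ₗ[R] B')
    (c : C →ₗ[R] C') (h1 : ∀ x, b (f x) = f' (a x)) (h2 : ∀ x, c (g x) = g' (b x))
    (y : E R Z C j) : push a (cn h y) = cn h' (push c y) := by
  have := extClass_nat h h' a b c h1 h2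
  simp only [cn, push, LinearMap.coe_mk, AddHom.coe_mk]
  rw [Ext.comp_assoc_of_third_deg_zero, this, Ext.comp_assoc_of_second_deg_zero]

end

/-- Degree zero. -/
noncomputable def h0 (f : A →ₗ[R] Y) : E R A Y 0 := Ext.mk₀ (ModuleCat.ofHom f)

theorem h0_surj (x : E R A Y 0) : ∃ f, h0 f = x := by
  obtain ⟨f, hf⟩ := (Ext.mk₀_bijective _ _).2 x
  exact ⟨f.hom, by simpa [h0] using hf⟩

theorem h0_inj {f g : A →ₗ[R] Y} (hh : h0 f = h0 g) : f = g := by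
  have := (Ext.mk₀_bijective _ _).1 hh
  simpa using congrArg ModuleCat.Hom.hom this

theorem pull_h0 (f : A →ₗ[R] B) (g : B →ₗ[R] Y) : pull f (h0 g) = h0 (g ∘ₗ f) := by
  simp [pull, h0, ModuleCat.ofHom_comp]

theorem push_h0 (f : Z →ₗ[R] A) (g : A →ₗ[R] B) : push g (h0 f) = h0 (g ∘ₗ f) := by
  simp [push, h0, ModuleCat.ofHom_comp]

theorem h0_smul (r : R) (f : A →ₗ[R] Y) : h0 (r • f) = r • h0 f := by
  rw [h0, ofHom_smul', Ext.mk₀_smul]; rfl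

theorem h0_zero : h0 (0 : A →ₗ[R] Y) = 0 := by
  simp [h0]

theorem proj_vanish [Module.Projective R P] (x : E R P Y (j+1)) : x = 0 := by
  haveI : Projective (ModuleCat.of R P) := (IsProjective.iff_projective (R := R) P).1 inferInstance
  exact Ext.eq_zero_of_projective x

theorem push_f_inj {f : A →ₗ[R] B} {g : B →ₗ[R] C} (h : IsSES f g) (x : E R Z A 0)
    (hx : push f x = 0) : x = 0 := by
  obtain ⟨φ, rfl⟩ := h0_surj x
  rw [push_h0, ← h0_zero] at hx
  have := h0_inj hx
  have h2 : φ = 0 := LinearMap.ext fun z => h.1 (by simpa using LinearMap.congr_fun this z)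
  rw [h2, h0_zero]

/-- Projective dimension less than `n`. -/
abbrev PD (R : Type u) [CommRing R] (n : ℕ) (A : Type u) [AddCommGroup A] [Module R A] : Prop :=
  HasProjectiveDimensionLT (ModuleCat.of R A) n

theorem PD.vanish {n : ℕ} (h : PD R n A) (hj : n ≤ j) (x : E R A Y j) : x = 0 :=
  haveI := h
  Ext.eq_zero_of_hasProjectiveDimensionLT x n hj

theorem PD.mono {n m : ℕ} (h : PD R n A) (hm : n ≤ m) : PD R m A :=
  haveI := h
  hasProjectiveDimensionLT_of_ge _ n m hm

theorem PD_one_iff : PD R 1 A ↔ Module.Projective R A := by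
  rw [PD, ← projective_iff_hasProjectiveDimensionLT_one, ← IsProjective.iff_projective]

theorem PD_proj [Module.Projective R A] : PD R 1 A := PD_one_iff.2 inferInstance

theorem PD_three {f : A →ₗ[R] B} {g : B →ₗ[R] C} (h : IsSES f g) {n : ℕ} (h1 : PD R n A)
    (h2 : PD R (n+1) B) : PD R (n+1) C := h.se.hasProjectiveDimensionLT_X₃ n h1 h2
theorem PD_two {f : A →ₗ[R] B} {g : B →ₗ[R] C} (h : IsSES f g) {n : ℕ} (h1 : PD R n A)
    (h2 : PD R n C) : PD R n B := h.se.hasProjectiveDimensionLT_X₂ n h1 h2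
theorem PD_one {f : A →ₗ[R] B} {g : B →ₗ[R] C} (h : IsSES f g) {n : ℕ} (h1 : PD R n B)
    (h2 : PD R (n+1) C) : PD R n A := h.se.hasProjectiveDimensionLT_X₁ n h1 h2

end ExtWrap

section FinPd

variable {R}
variable {A B C D F G K L M N P Q X Y Z : Type u}
  [AddCommGroup A] [Module R A] [AddCommGroup B] [Module R B] [AddCommGroup C] [Module R C]
  [AddCommGroup D] [Module R D] [AddCommGroup K] [Module R K] [AddCommGroup L] [Module R L]
  [AddCommGroup M] [Module R M] [AddCommGroup N] [Module R N] [AddCommGroup P] [Module R P]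
  [AddCommGroup Q] [Module R Q] [AddCommGroup X] [Module R X] [AddCommGroup Y] [Module R Y]
  [AddCommGroup Z] [Module R Z] [AddCommGroup F] [Module R F] [AddCommGroup G] [Module R G]
variable {j : ℕ}

theorem dl_surj [Module.Projective R B] {f : A →ₗ[R] B} {g : B →ₗ[R] C} (h : IsSES f g)
    (x : E R C Y (j+1)) : ∃ y : E R A Y j, dl h y = x :=
  ex3 h x (proj_vanish _)

theorem dl_inj [Module.Projective R B] {f : A →ₗ[R] B} {g : B →ₗ[R] C} (h : IsSES f g)
    (x : E R A Y (j+1)) (hx : dl h x = 0) : x = 0 := by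
  obtain ⟨y, rfl⟩ := ex1 h x hx
  rw [proj_vanish y, map_zero]

theorem vanish_pi {n : ℕ} (h : ∀ x : E R A R j, x = 0) (x : E R A (Fin n → R) j) : x = 0 := by
  have h1 : (LinearMap.id : (Fin n → R) →ₗ[R] (Fin n → R)) =
      ∑ i, (LinearMap.single R (fun _ => R) i) ∘ₗ (LinearMap.proj i) := by
    ext i j
    simp
  rw [← push_id x, h1, push_sum]
  refine Finset.sum_eq_zero fun i _ => ?_
  rw [push_comp, h (push _ x), map_zero]

theorem vanish_retract (h : ∀ x : E R A Y j, x = 0) (i : Z →ₗ[R] Y) (r : Y →ₗ[R] Z)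
    (hr : ∀ z, r (i z) = z) (x : E R A Z j) : x = 0 := by
  have h1 : (LinearMap.id : Z →ₗ[R] Z) = r ∘ₗ i := LinearMap.ext fun z => (hr z).symm
  rw [← push_id x, h1, push_comp, h (push _ x), map_zero]

theorem vanish_fgproj [Module.Finite R P] [Module.Projective R P]
    (h : ∀ x : E R A R j, x = 0) (x : E R A P j) : x = 0 := by
  obtain ⟨n, g, hg⟩ := Module.Finite.exists_fin' R P
  obtain ⟨s, hs⟩ := Module.projective_lifting_property g LinearMap.id hg
  exact vanish_retract (vanish_pi (n := n) h) s g (fun z => LinearMap.congr_fun hs z) x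

theorem split_of_ext_one {f : A →ₗ[R] B} {g : B →ₗ[R] C} (h : IsSES f g)
    (h1 : ∀ x : E R C A 1, x = 0) : ∃ r : B →ₗ[R] A, ∀ a, r (f a) = a := by
  obtain ⟨y, hy⟩ := ex1 h (h0 (LinearMap.id : A →ₗ[R] A)) (h1 _)
  obtain ⟨r, rfl⟩ := h0_surj y
  rw [pull_h0] at hy
  exact ⟨r, fun a => LinearMap.congr_fun (h0_inj hy) a⟩

/-- Extend maps `A → Y` along `f` when `Ext¹(C,Y)=0`. -/
theorem extend_of_ext_one {f : A →ₗ[R] B} {g : B →ₗ[R] C} (h : IsSES f g)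
    (h1 : ∀ x : E R C Y 1, x = 0) (k : A →ₗ[R] Y) : ∃ r : B →ₗ[R] Y, ∀ a, r (f a) = k a := by
  obtain ⟨y, hy⟩ := ex1 h (h0 k) (h1 _)
  obtain ⟨r, rfl⟩ := h0_surj y
  rw [pull_h0] at hy
  exact ⟨r, fun a => LinearMap.congr_fun (h0_inj hy) a⟩

theorem fg_ker [IsNoetherianRing R] {f : A →ₗ[R] B} (h : Function.Injective f)
    [Module.Finite R B] : Module.Finite R A := Module.Finite.of_injective f h

theorem F2 [IsNoetherianRing R] (m : ℕ) : ∀ (A : Type u) [AddCommGroup A] [Module R A]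
    [Module.Finite R A], PD R (m+1) A → (∀ j, ∀ x : E R A R (j+1), x = 0) →
    Module.Projective R A := by
  induction m with
  | zero => intro A _ _ _ h _; exact PD_one_iff.1 h
  | succ m ih =>
    intro A _ _ _ h hv
    obtain ⟨n, g, hg⟩ := exists_free_ses (R := R) A
    have hK : Module.Projective R (LinearMap.ker g) := by
      refine ih _ (PD_one hg (PD_proj.mono (by omega)) h) ?_
      intro j x
      exact dl_inj hg x (hv _ _)
    obtain ⟨r, hr⟩ := split_of_ext_one hg (vanish_fgproj (hv 0))
    have hinj : Function.Surjective g := hg.2.1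
    -- section of g
    obtain ⟨l, hl⟩ := hg.descMap (LinearMap.id - (LinearMap.ker g).subtype ∘ₗ r)
      (fun a => by
        change (a : Fin n → R) - (r ((LinearMap.ker g).subtype a) : Fin n → R) = 0
        rw [hr, sub_self])
    refine Module.Projective.of_split l g ?_
    ext a
    obtain ⟨b, rfl⟩ := hinj a
    have : g (r b : Fin n → R) = 0 := (r b).2
    simp [hl, this]

theorem F4 [IsNoetherianRing R] (n : ℕ) : ∀ (A : Type u) [AddCommGroup A] [Module R A]
    [Module.Finite R A] (m : ℕ), PD R m A → (∀ j, n + 1 ≤ j → ∀ x : E R A R j, x = 0) →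
    PD R (n+1) A := by
  induction n with
  | zero =>
    intro A _ _ _ m h hv
    exact PD_one_iff.2 (F2 m A (h.mono (by omega)) (fun j x => hv _ (by omega) x))
  | succ n ih =>
    intro A _ _ _ m h hv
    obtain ⟨k, g, hg⟩ := exists_free_ses (R := R) A
    refine PD_three hg (ih _ (m+1) (PD_one hg (PD_proj.mono (by omega)) (h.mono (by omega))) ?_)
      (PD_proj.mono (by omega))
    intro j hj x
    obtain ⟨j, rfl⟩ : ∃ i, j = i + 1 := ⟨j-1, by omega⟩
    exact dl_inj hg x (hv _ (by omega) _)

theorem PD_of_pdLE (n : ℕ) : ∀ (A : ModuleCat.{u} R), pdLE R n A → PD R (n+1) A := by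
  induction n with
  | zero => intro A h; exact PD_one_iff.2 h
  | succ n ih =>
    rintro A ⟨K, P, f, g, _, _, hs, hK⟩
    exact PD_three hs (ih K hK) (PD_proj.mono (by omega))

theorem pdLE_of_PD [IsNoetherianRing R] (n : ℕ) : ∀ (A : Type u) [AddCommGroup A] [Module R A]
    [Module.Finite R A], PD R (n+1) A → pdLE R n (ModuleCat.of R A) := by
  induction n with
  | zero => intro A _ _ _ h; exact PD_one_iff.1 h
  | succ n ih =>
    intro A _ _ _ h
    obtain ⟨k, g, hg⟩ := exists_free_ses (R := R) A
    refine ⟨ModuleCat.of R (LinearMap.ker g), ModuleCat.of R (ULift.{0} (Fin k → R)),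
      ULift.moduleEquiv.symm.toLinearMap ∘ₗ (LinearMap.ker g).subtype,
      g ∘ₗ ULift.moduleEquiv.toLinearMap, ?_, ?_, ?_, ?_⟩
    · exact Module.Finite.equiv (ULift.moduleEquiv (R := R) (M := Fin k → R)).symm
    · exact Module.Projective.of_equiv (ULift.moduleEquiv (R := R) (M := Fin k → R)).symm
    · refine IsSES.mk' ?_ ?_ ?_ ?_
      · intro a b hab; exact hg.1 (by simpa using hab)
      · exact hg.2.1.comp ULift.moduleEquiv.surjective
      · intro a; exact a.2
      · rintro ⟨b⟩ hb; exact ⟨⟨b, hb⟩, rfl⟩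
    · exact ih _ (PD_one hg (PD_proj.mono (by omega)) h)

/-- `A` has finite projective dimension and `N` is the top nonvanishing degree of `Ext(A,R)`. -/
structure Top (R : Type u) [CommRing R] (N : ℕ) (A : Type u) [AddCommGroup A] [Module R A] :
    Prop where
  pd : ∃ m, PD R m A
  ne : ∃ x : E R A R N, x ≠ 0
  van : ∀ j, N < j → ∀ x : E R A R j, x = 0

theorem Top.pdN [IsNoetherianRing R] {N : ℕ} [Module.Finite R A] (h : Top R N A) :
    PD R (N+1) A := by
  obtain ⟨m, hm⟩ := h.pd
  exact F4 N A m hm (fun j hj => h.van j hj)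

theorem exists_top {m : ℕ} (h : PD R m A) {n : ℕ} {x : E R A R n} (hx : x ≠ 0) :
    ∃ N, n ≤ N ∧ Top R N A := by
  classical
  let P : ℕ → Prop := fun N => n ≤ N ∧ ∃ y : E R A R N, y ≠ 0
  have hb : ∀ N, P N → N ≤ m := by
    rintro N ⟨_, y, hy⟩
    by_contra hlt
    exact hy (h.vanish (by omega) y)
  have hn : P n := ⟨le_rfl, x, hx⟩
  have hs := Nat.findGreatest_spec (P := P) (hb n hn) hn
  refine ⟨Nat.findGreatest P m, hs.1, ⟨m, h⟩, hs.2, ?_⟩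
  intro j hj y
  by_contra hy
  have hPj : P j := ⟨by omega, y, hy⟩
  have := Nat.le_findGreatest (hb j hPj) hPj
  omega

theorem Top.syz [Module.Projective R B] {f : A →ₗ[R] B} {g : B →ₗ[R] C} (h : IsSES f g) {N : ℕ}
    (hC : Top R (N+2) C) : Top R (N+1) A := by
  obtain ⟨m, hm⟩ := hC.pd
  refine ⟨⟨m+1, PD_one h (PD_proj.mono (by omega)) (hm.mono (by omega))⟩, ?_, ?_⟩
  · obtain ⟨x, hx⟩ := hC.ne
    obtain ⟨y, rfl⟩ := dl_surj h x
    exact ⟨y, fun h0 => hx (by rw [h0, map_zero])⟩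
  · intro j hj x
    obtain ⟨j, rfl⟩ : ∃ i, j = i + 1 := ⟨j-1, by omega⟩
    exact dl_inj h x (hC.van _ (by omega) _)

/-- An iterated syzygy with prescribed top. -/
theorem Top.exists_syz [IsNoetherianRing R] {N : ℕ} : ∀ (A : Type u) [AddCommGroup A] [Module R A]
    [Module.Finite R A], Top R N A → ∀ i, 1 ≤ i → i ≤ N →
    ∃ Z : ModuleCat.{u} R, Module.Finite R Z ∧ Top R i Z := by
  induction N with
  | zero => intros; omega
  | succ N ih =>
    intro A _ _ _ h i h1 h2
    rcases Nat.eq_or_lt_of_le h2 with rfl | h3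
    · exact ⟨ModuleCat.of R A, ‹_›, h⟩
    · obtain ⟨N, rfl⟩ : ∃ n, N = n + 1 := ⟨N-1, by omega⟩
      obtain ⟨k, g, hg⟩ := exists_free_ses (R := R) A
      exact ih _ (h.syz hg) i h1 (by omega)

theorem pdim_le_of_pdLE {n : ℕ} {A : ModuleCat.{u} R} (h : pdLE R n A) :
    pdim R A ≤ ((n : ℕ∞) : WithBot ℕ∞) :=
  sInf_le (Or.inr ⟨n, rfl, h⟩)

theorem pdim_cases (A : ModuleCat.{u} R) (h : pdim R A ≠ ⊤) :
    Subsingleton A ∨ ∃ n : ℕ, pdim R A = (n : ℕ∞) ∧ pdLE R n A := by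
  have hne : {x : WithBot ℕ∞ | (x = ⊥ ∧ Subsingleton A) ∨
      ∃ n : ℕ, x = (n : ℕ∞) ∧ pdLE R n A}.Nonempty := by
    by_contra hc
    rw [Set.not_nonempty_iff_eq_empty] at hc
    exact h (by rw [pdim, hc, sInf_empty])
  have := csInf_mem hne
  rcases this with h1 | h1
  · exact Or.inl h1.2
  · exact Or.inr h1

/-- Comparison of projective dimensions in terms of tops. -/
theorem top_of_pdim_le [IsNoetherianRing R] [IsLocalRing R] {M X : ModuleCat.{u} R}
    [Module.Finite R M] [Module.Finite R X] (hM : ¬ Module.Free R M)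
    (hle : pdim R M ≤ pdim R X) (hX : pdim R X ≠ ⊤) :
    ∃ n N, 1 ≤ n ∧ n ≤ N ∧ Top R n M ∧ Top R N X := by
  have hMt : pdim R M ≠ ⊤ := fun h => hX (top_le_iff.1 (h ▸ hle))
  rcases pdim_cases M hMt with hs | ⟨a, ha, hal⟩
  · exact absurd (Module.Free.of_subsingleton R M) hM
  have hMp := PD_of_pdLE a M hal
  have : ∃ j, ∃ x : E R M R (j+1), x ≠ 0 := by
    by_contra hc
    push Not at hc
    haveI := F2 a M hMp hc
    exact hM Module.free_of_flat_of_isLocalRing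
  obtain ⟨j, x, hx⟩ := this
  obtain ⟨n, hn, hT⟩ := exists_top hMp hx
  obtain ⟨m, hXp⟩ : ∃ m, PD R m X := by
    rcases pdim_cases X hX with hs | ⟨b, hb, hbl⟩
    · exact ⟨1, PD_proj⟩
    · exact ⟨_, PD_of_pdLE b X hbl⟩
  have : ∃ j, n ≤ j ∧ ∃ x : E R X R j, x ≠ 0 := by
    by_contra hc
    push Not at hc
    obtain ⟨n, rfl⟩ : ∃ k, n = k + 1 := ⟨n-1, by omega⟩
    have h1 := pdLE_of_PD n X (F4 n X m hXp hc)
    have h2 := hle.trans (pdim_le_of_pdLE h1)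
    rw [ha] at h2
    have h3 : a ≤ n := by exact_mod_cast h2
    obtain ⟨x, hx⟩ := hT.ne
    exact hx (hMp.vanish (by omega) x)
  obtain ⟨i, hi, y, hy⟩ := this
  obtain ⟨N, hN, hTX⟩ := exists_top hXp hy
  exact ⟨n, N, by omega, by omega, hT, hTX⟩

end FinPd

section Depth

variable {R}
variable {A B C D F G K L M N P Q X Y Z : Type u}
  [AddCommGroup A] [Module R A] [AddCommGroup B] [Module R B] [AddCommGroup C] [Module R C]
  [AddCommGroup D] [Module R D] [AddCommGroup K] [Module R K] [AddCommGroup L] [Module R L]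
  [AddCommGroup M] [Module R M] [AddCommGroup N] [Module R N] [AddCommGroup P] [Module R P]
  [AddCommGroup Q] [Module R Q] [AddCommGroup X] [Module R X] [AddCommGroup Y] [Module R Y]
  [AddCommGroup Z] [Module R Z] [AddCommGroup F] [Module R F] [AddCommGroup G] [Module R G]
variable {j : ℕ}

open IsLocalRing in
theorem core [IsNoetherianRing R] [IsLocalRing R] [Module.Finite R F] [Module.Free R F]
    [Module.Finite R Y] (hY : Top R 1 Y) {f : K →ₗ[R] F} {g : F →ₗ[R] Y} (h : IsSES f g) :
    ∃ (u : K) (ρ : K →ₗ[R] R), ρ u = 1 ∧ ∀ φ : F →ₗ[R] R, φ (f u) ∈ maximalIdeal R := by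
  haveI : Module.Finite R K := fg_ker h.1
  haveI : Module.Projective R K := PD_one_iff.1 (PD_one h PD_proj hY.pdN)
  haveI : Module.Free R K := Module.free_of_flat_of_isLocalRing
  have hns : ¬ Function.Injective (f.lTensor (ResidueField R)) := by
    intro hinj
    obtain ⟨l, hl⟩ := (IsLocalRing.split_injective_iff_lTensor_residueField_injective f).2 hinj
    obtain ⟨x, hx⟩ := hY.ne
    obtain ⟨y, rfl⟩ := dl_surj h x
    apply hx
    have : y = pull f (pull l y) := by
      rw [← pull_comp, hl, pull_id]
    rw [this, dl_pull]
  rw [injective_iff_map_eq_zero] at hns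
  push Not at hns
  obtain ⟨z, hz, hz0⟩ := hns
  obtain ⟨u, rfl⟩ : ∃ u : K, (1 : ResidueField R) ⊗ₜ[R] u = z := by
    induction z using TensorProduct.induction_on with
    | zero => exact absurd rfl hz0
    | tmul a b =>
      obtain ⟨a, rfl⟩ := residue_surjective a
      refine ⟨a • b, ?_⟩
      rw [← TensorProduct.smul_tmul]
      congr 1
      rw [Algebra.smul_def, mul_one]; rfl
    | add a b ha hb =>
      have : Function.Surjective (TensorProduct.mk R (ResidueField R) K 1) :=
        TensorProduct.mk_surjective _ _ _ residue_surjective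
      exact this _
  rw [LinearMap.lTensor_tmul] at hz
  have key : ∀ φ : F →ₗ[R] R, φ (f u) ∈ maximalIdeal R := by
    intro φ
    have h1 := congrArg (fun t => TensorProduct.rid R (ResidueField R)
      (φ.lTensor (ResidueField R) t)) hz
    simp only [LinearMap.lTensor_tmul, TensorProduct.rid_tmul, map_zero] at h1
    rw [Algebra.smul_def, mul_one] at h1
    exact (residue_eq_zero_iff _).1 h1
  let b := Module.Free.chooseBasis R K
  have : ∃ i, b.repr u i ∉ maximalIdeal R := by
    by_contra hc
    push Not at hc
    apply hz0
    rw [← b.sum_repr u, TensorProduct.tmul_sum]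
    refine Finset.sum_eq_zero fun i _ => ?_
    rw [← TensorProduct.smul_tmul, Algebra.smul_def, mul_one]
    have : (algebraMap R (ResidueField R)) (b.repr u i) = 0 := (residue_eq_zero_iff _).2 (hc i)
    rw [this, TensorProduct.zero_tmul]
  obtain ⟨i, hi⟩ := this
  have hu : IsUnit (b.repr u i) := by simpa using hi
  obtain ⟨v, hv⟩ := hu.exists_right_inv
  refine ⟨u, v • b.coord i, ?_, key⟩
  simpa [mul_comm v] using hv

open IsLocalRing in
theorem kill_k [IsLocalRing R] {r : R} (hr : r ∈ maximalIdeal R)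
    (x : E R (ResidueField R) Y j) : r • x = 0 := by
  have : r • (LinearMap.id : ResidueField R →ₗ[R] ResidueField R) = 0 := by
    ext a
    simp only [LinearMap.smul_apply, LinearMap.id_apply, LinearMap.zero_apply]
    rw [Algebra.smul_def]
    have : (algebraMap R (ResidueField R)) r = 0 := (residue_eq_zero_iff _).2 hr
    rw [this, zero_mul]
  rw [← pull_id x, ← pull_smul, this, pull_zero]

theorem eq_zero_of_push [Module.Finite R P] [Module.Projective R P]
    (x : E R A P j) (h : ∀ φ : P →ₗ[R] R, push φ x = 0) : x = 0 := by
  obtain ⟨n, g, hg⟩ := Module.Finite.exists_fin' R P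
  obtain ⟨s, hs⟩ := Module.projective_lifting_property g LinearMap.id hg
  have h1 : (LinearMap.id : P →ₗ[R] P) =
      ∑ i, (g ∘ₗ (LinearMap.single R (fun _ => R) i)) ∘ₗ (LinearMap.proj i ∘ₗ s) := by
    have h2 : (LinearMap.id : (Fin n → R) →ₗ[R] (Fin n → R)) =
      ∑ i, (LinearMap.single R (fun _ => R) i) ∘ₗ (LinearMap.proj i) := by
      ext i j
      simp
    have h3 : g ∘ₗ LinearMap.id ∘ₗ s = LinearMap.id := hs
    rw [← h3, h2]
    ext a
    simp
  rw [← push_id x, h1, push_sum]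
  refine Finset.sum_eq_zero fun i _ => ?_
  rw [push_comp, h, map_zero]

open IsLocalRing in
theorem depth_aux [IsNoetherianRing R] [IsLocalRing R] {d : ℕ} (y : E R (ResidueField R) R d)
    (hy : y ≠ 0) (hd : ∀ j, j < d → ∀ x : E R (ResidueField R) R j, x = 0) (i : ℕ) :
    ∀ (Z : Type u) [AddCommGroup Z] [Module R Z] [Module.Finite R Z], Top R (i+1) Z →
    ∀ (j n : ℕ) (g : (Fin n → R) →ₗ[R] Z), IsSES (LinearMap.ker g).subtype g → j + i = d →
    ∃ x : E R (ResidueField R) (LinearMap.ker g) j, x ≠ 0 ∧ push (LinearMap.ker g).subtype x = 0 := by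
  induction i with
  | zero =>
    intro Z _ _ _ hT j n g hg hj
    obtain rfl : j = d := by omega
    obtain ⟨u, ρ, h1, h2⟩ := core hT hg
    refine ⟨push (LinearMap.toSpanSingleton R _ u) y, ?_, ?_⟩
    · intro h0
      apply hy
      have h3 : (LinearMap.id : R →ₗ[R] R) = ρ ∘ₗ LinearMap.toSpanSingleton R _ u := by
        ext; simp [h1]
      rw [← push_id y, h3, push_comp, h0, map_zero]
    · apply eq_zero_of_push
      intro φ
      rw [← push_comp, ← push_comp, LinearMap.comp_assoc]
      have h3 : φ ∘ₗ (LinearMap.ker g).subtype ∘ₗ LinearMap.toSpanSingleton R _ u =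
        (φ ((LinearMap.ker g).subtype u)) • (LinearMap.id : R →ₗ[R] R) := by
        ext; simp
      rw [h3, push_smul, push_id]
      exact kill_k (h2 φ) y
  | succ i ih =>
    intro Z _ _ _ hT j n g hg hj
    obtain ⟨n', g', hg'⟩ := exists_free_ses (R := R) (LinearMap.ker g)
    obtain ⟨x', hx', hp⟩ := ih (LinearMap.ker g) (hT.syz hg) (j+1) n' g' hg' (by omega)
    obtain ⟨z, rfl⟩ := coex1 hg' x' hp
    refine ⟨z, fun h0 => hx' (by rw [h0, map_zero]), ?_⟩
    exact vanish_pi (hd j (by omega)) _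

open IsLocalRing in
/-- Depth bound. -/
theorem depth_bound [IsNoetherianRing R] [IsLocalRing R] {n : ℕ} [Module.Finite R X]
    (hX : Top R n X) : ∀ j, j < n → ∀ x : E R (ResidueField R) R j, x = 0 := by
  intro j
  induction j using Nat.strong_induction_on with
  | _ d ih =>
    intro hd y
    by_contra hy
    obtain ⟨Z, hZ, hT⟩ := hX.exists_syz X (d+1) (by omega) (by omega)
    obtain ⟨n', g, hg⟩ := exists_free_ses (R := R) Z
    obtain ⟨x, hx, hp⟩ := depth_aux y hy (fun j hj => ih j hj (by omega)) d Z hT 0 n' g hg (by omega)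
    exact hx (push_f_inj hg x hp)

end Depth

section TestMod

variable {R}
variable {A B C D F G K L M N P Q X Y Z : Type u}
  [AddCommGroup A] [Module R A] [AddCommGroup B] [Module R B] [AddCommGroup C] [Module R C]
  [AddCommGroup D] [Module R D] [AddCommGroup K] [Module R K] [AddCommGroup L] [Module R L]
  [AddCommGroup M] [Module R M] [AddCommGroup N] [Module R N] [AddCommGroup P] [Module R P]
  [AddCommGroup Q] [Module R Q] [AddCommGroup X] [Module R X] [AddCommGroup Y] [Module R Y]
  [AddCommGroup Z] [Module R Z] [AddCommGroup F] [Module R F] [AddCommGroup G] [Module R G]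
variable {j : ℕ}

open IsLocalRing

theorem IsSES.descSq {f : A →ₗ[R] B} {g : B →ₗ[R] C} (h : IsSES f g) {f' : K →ₗ[R] F}
    {g' : F →ₗ[R] M} (h' : IsSES f' g') (a : A →ₗ[R] K) (b : B →ₗ[R] F)
    (hab : ∀ x, b (f x) = f' (a x)) : ∃ c : C →ₗ[R] M, ∀ x, c (g x) = g' (b x) := by
  obtain ⟨l, hl⟩ := h.descMap (g' ∘ₗ b) (fun x => by
    simp only [LinearMap.comp_apply]; rw [hab, h'.comp_zero])
  exact ⟨l, hl⟩

theorem isSES_quot {f : A →ₗ[R] B} (hf : Function.Injective f) :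
    IsSES f (LinearMap.range f).mkQ :=
  ⟨hf, Submodule.mkQ_surjective _, by simp⟩

theorem socle_zero [IsLocalRing R] (h : ∀ x : E R (ResidueField R) A 0, x = 0) (t : A)
    (ht : ∀ s ∈ maximalIdeal R, s • t = 0) : t = 0 := by
  have hs : IsSES (Submodule.subtype (maximalIdeal R))
      (Algebra.linearMap R (ResidueField R)) := by
    refine IsSES.mk' Subtype.val_injective residue_surjective ?_ ?_
    · intro a; exact (residue_eq_zero_iff _).2 a.2
    · intro b hb; exact ⟨⟨b, (residue_eq_zero_iff _).1 hb⟩, rfl⟩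
  obtain ⟨l, hl⟩ := hs.descMap (LinearMap.toSpanSingleton R A t) (fun a => ht a.1 a.2)
  have h1 : l = 0 := h0_inj ((h _).trans (h _).symm)
  have h2 := hl 1
  rw [h1] at h2
  simpa using h2.symm

/-- Multiplication by `s` on `A` factors through a finite free module. -/
def FF (s : R) (A : Type u) [AddCommGroup A] [Module R A] : Prop :=
  ∃ (n : ℕ) (a : A →ₗ[R] (Fin n → R)) (b : (Fin n → R) →ₗ[R] A), ∀ t, b (a t) = s • t

theorem FF_of {n : ℕ} {f : A →ₗ[R] (Fin n → R)} {g : (Fin n → R) →ₗ[R] C} (h : IsSES f g)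
    {s : R} (c : (Fin n → R) →ₗ[R] A) (hc : ∀ x, c (f x) = s • x) : FF s C := by
  obtain ⟨a, ha⟩ := h.descMap (s • LinearMap.id - f ∘ₗ c) (fun x => by simp [hc])
  refine ⟨n, a, g, fun t => ?_⟩
  obtain ⟨y, rfl⟩ := h.2.1 t
  rw [ha]
  simp [h.comp_zero]

/-- The test modules. -/
structure TData [IsLocalRing R] (N i : ℕ) (T : Type u) [AddCommGroup T] [Module R T]
    (ζ : E R T R i) : Prop where
  fin : Module.Finite R T
  van : ∀ j, j + 1 ≠ i → ∀ x : E R T R (j+1), x = 0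
  gen : ∀ x : E R T R i, ∃ r : R, x = r • ζ
  ann : ∀ r ∈ maximalIdeal R, r • ζ = 0
  into : ∀ (M : Type u) [AddCommGroup M] [Module R M] [Module.Finite R M],
    (∀ j, j + 1 < i → ∀ x : E R M R (j+1), x = 0) → ∀ ξ : E R M R i,
    (∀ r ∈ maximalIdeal R, r • ξ = 0) → ∃ f : M →ₗ[R] T, pull f ζ = ξ
  from' : ∀ (Y : Type u) [AddCommGroup Y] [Module R Y] [Module.Finite R Y], Top R i Y →
    ∃ (f : T →ₗ[R] Y) (η : E R Y R i), pull f η = ζ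
  dep : ∀ j, i + j < N → ∀ x : E R (ResidueField R) T j, x = 0
  ff : ∀ s ∈ maximalIdeal R, FF s T
  pd : PD R (i+1) T

theorem exists_T_one [IsNoetherianRing R] [IsLocalRing R] {N : ℕ} (hN : 1 ≤ N)
    (hd : ∀ j, j < N → ∀ x : E R (ResidueField R) R j, x = 0) :
    ∃ (T : ModuleCat.{u} R) (ζ : E R T R 1), TData (R := R) N 1 T ζ := by
  obtain ⟨r, x, hx⟩ : ∃ (r : ℕ) (x : Fin r → R), Ideal.span (Set.range x) = maximalIdeal R := by
    obtain ⟨r, x, hx⟩ := Submodule.fg_iff_exists_fin_generating_family.1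
      (IsNoetherian.noetherian (maximalIdeal R))
    exact ⟨r, x, hx⟩
  have hxm : ∀ l, x l ∈ maximalIdeal R := fun l => hx ▸ Ideal.subset_span ⟨l, rfl⟩
  have hcomb : ∀ s ∈ maximalIdeal R, ∃ c : (Fin r → R) →ₗ[R] R, c x = s := by
    intro s hs
    rw [← hx] at hs
    obtain ⟨c, hc⟩ := (Submodule.mem_span_range_iff_exists_fun R).1 hs
    exact ⟨∑ l, c l • LinearMap.proj l, by simpa using hc⟩
  let φ : R →ₗ[R] (Fin r → R) := LinearMap.toSpanSingleton R _ x
  have hφ1 : ∀ a, φ a = a • x := fun a => rfl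
  have hφ : Function.Injective φ := by
    rw [injective_iff_map_eq_zero]
    intro a ha
    refine socle_zero (hd 0 (by omega)) a ?_
    intro s hs
    obtain ⟨c, hc⟩ := hcomb s hs
    have : c (φ a) = 0 := by rw [ha, map_zero]
    rw [hφ1, map_smul, hc] at this
    simpa [mul_comm] using this
  have hS := isSES_quot hφ
  refine ⟨ModuleCat.of R _, dl hS (h0 LinearMap.id), ?_⟩
  have hext : ∀ s ∈ maximalIdeal R, ∃ c : (Fin r → R) →ₗ[R] R, ∀ a, c (φ a) = s • a := by
    intro s hs
    obtain ⟨c, hc⟩ := hcomb s hs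
    exact ⟨c, fun a => by rw [hφ1, map_smul, hc, smul_eq_mul, smul_eq_mul, mul_comm]⟩
  constructor
  · infer_instance
  · intro j hj y
    obtain ⟨j, rfl⟩ : ∃ i, j = i + 1 := ⟨j-1, by omega⟩
    obtain ⟨z, rfl⟩ := dl_surj hS y
    rw [proj_vanish z, map_zero]
  · intro y
    obtain ⟨z, rfl⟩ := dl_surj hS y
    obtain ⟨ψ, rfl⟩ := h0_surj z
    refine ⟨ψ 1, ?_⟩
    have : ψ = ψ 1 • LinearMap.id := by ext; simp
    rw [← map_smul, ← h0_smul, ← this]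
  · intro s hs
    obtain ⟨c, hc⟩ := hext s hs
    have : s • (LinearMap.id : R →ₗ[R] R) = c ∘ₗ φ := LinearMap.ext fun a => (hc a).symm
    rw [← map_smul, ← h0_smul, this, ← pull_h0, dl_pull]
  · intro M _ _ _ _ ξ hξ
    obtain ⟨n, g, hg⟩ := exists_free_ses (R := R) M
    obtain ⟨z, rfl⟩ := dl_surj hg ξ
    obtain ⟨κ, rfl⟩ := h0_surj z
    have : ∀ l, ∃ c : (Fin n → R) →ₗ[R] R, ∀ a, c ((LinearMap.ker g).subtype a) = x l • κ a := by
      intro l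
      have h1 : dl hg (h0 (x l • κ)) = 0 := by rw [h0_smul, map_smul, hξ _ (hxm l)]
      obtain ⟨y, hy⟩ := ex1 hg _ h1
      obtain ⟨c, rfl⟩ := h0_surj y
      rw [pull_h0] at hy
      exact ⟨c, fun a => LinearMap.congr_fun (h0_inj hy) a⟩
    choose c hc using this
    have hsq : ∀ a, (LinearMap.pi c) ((LinearMap.ker g).subtype a) = φ (κ a) := by
      intro a
      ext l
      rw [LinearMap.pi_apply, hc, hφ1]
      simp [mul_comm]
    obtain ⟨f, hf⟩ := hg.descSq hS κ (LinearMap.pi c) hsq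
    refine ⟨f, ?_⟩
    rw [← dl_nat hg hS κ (LinearMap.pi c) f hsq hf, pull_h0, LinearMap.id_comp]
  · intro Y _ _ _ hY
    obtain ⟨n, g, hg⟩ := exists_free_ses (R := R) Y
    obtain ⟨u, ρ, h1, h2⟩ := core hY hg
    have : ∀ l, ∃ c : (Fin r → R) →ₗ[R] R, c x = (LinearMap.ker g).subtype u l :=
      fun l => hcomb _ (h2 (LinearMap.proj l))
    choose c hc using this
    have hsq : ∀ a, (LinearMap.pi c) (φ a) =
        (LinearMap.ker g).subtype (LinearMap.toSpanSingleton R _ u a) := by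
      intro a
      ext l
      rw [LinearMap.pi_apply, hφ1, map_smul, hc]
      simp
    obtain ⟨f, hf⟩ := hS.descSq hg _ (LinearMap.pi c) hsq
    refine ⟨f, dl hg (h0 ρ), ?_⟩
    rw [← dl_nat hS hg _ (LinearMap.pi c) f hsq hf, pull_h0]
    congr 2
    ext; simp [h1]
  · intro j hj y
    obtain ⟨z, rfl⟩ := coex3 hS y (hd _ (by omega) _)
    rw [vanish_pi (hd _ (by omega)) z, map_zero]
  · intro s hs
    obtain ⟨c, hc⟩ := hext s hs
    exact FF_of hS c hc
  · exact PD_three hS PD_proj (PD_proj.mono (by omega))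

theorem exists_T_succ [IsNoetherianRing R] [IsLocalRing R] {N i : ℕ} (hN : i + 2 ≤ N)
    (hd : ∀ j, j < N → ∀ x : E R (ResidueField R) R j, x = 0)
    (T : Type u) [AddCommGroup T] [Module R T] (ζ : E R T R (i+1)) (hT : TData (R := R) N (i+1) T ζ) :
    ∃ (T' : ModuleCat.{u} R) (ζ' : E R T' R (i+2)), TData (R := R) N (i+2) T' ζ' := by
  haveI := hT.fin
  obtain ⟨r, t, ht⟩ := Submodule.fg_iff_exists_fin_generating_family.1
      (IsNoetherian.noetherian (⊤ : Submodule R (T →ₗ[R] R)))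
  let φ : T →ₗ[R] (Fin r → R) := LinearMap.pi t
  have hext : ∀ k : T →ₗ[R] R, ∃ c : (Fin r → R) →ₗ[R] R, ∀ a, c (φ a) = k a := by
    intro k
    have hk : k ∈ Submodule.span R (Set.range t) := by rw [ht]; trivial
    obtain ⟨c, hc⟩ := (Submodule.mem_span_range_iff_exists_fun R).1 hk
    exact ⟨∑ l, c l • LinearMap.proj l, fun a => by simp [φ, ← hc]⟩
  have hextn : ∀ (n : ℕ) (k : T →ₗ[R] (Fin n → R)), ∃ c : (Fin r → R) →ₗ[R] (Fin n → R),
      ∀ a, c (φ a) = k a := by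
    intro n k
    choose c hc using fun l => hext (LinearMap.proj l ∘ₗ k)
    exact ⟨LinearMap.pi c, fun a => by ext l; simpa using hc l a⟩
  have hφ : Function.Injective φ := by
    rw [injective_iff_map_eq_zero]
    intro a ha
    refine socle_zero (hT.dep 0 (by omega)) a ?_
    intro s hs
    obtain ⟨n, p, q, hpq⟩ := hT.ff s hs
    obtain ⟨c, hc⟩ := hextn n p
    rw [← hpq, ← hc, ha, map_zero, map_zero]
  have hS := isSES_quot hφ
  refine ⟨ModuleCat.of R _, dl hS ζ, ?_⟩
  have hE1 : ∀ x : E R ((Fin r → R) ⧸ LinearMap.range φ) R 1, x = 0 := by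
    intro y
    obtain ⟨z, rfl⟩ := dl_surj hS y
    obtain ⟨ψ, rfl⟩ := h0_surj z
    obtain ⟨c, hc⟩ := hext ψ
    have : ψ = c ∘ₗ φ := LinearMap.ext fun a => (hc a).symm
    rw [this, ← pull_h0, dl_pull]
  constructor
  · infer_instance
  · intro j hj y
    rcases j with _ | j
    · exact hE1 y
    · obtain ⟨z, rfl⟩ := dl_surj hS y
      rw [hT.van j (by omega) z, map_zero]
  · intro y
    obtain ⟨z, rfl⟩ := dl_surj hS y
    obtain ⟨s, rfl⟩ := hT.gen z
    exact ⟨s, map_smul _ _ _⟩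
  · intro s hs
    rw [← map_smul, hT.ann s hs, map_zero]
  · intro M _ _ _ hM ξ hξ
    obtain ⟨n, g, hg⟩ := exists_free_ses (R := R) M
    obtain ⟨z, rfl⟩ := dl_surj hg ξ
    obtain ⟨κ, hκ⟩ := hT.into (LinearMap.ker g)
      (fun j hj x => dl_inj hg x (hM (j+1) (by omega) _)) z
      (fun s hs => dl_inj hg _ (by rw [map_smul, hξ s hs]))
    obtain ⟨b, hsq⟩ := extend_of_ext_one hg (vanish_pi (hM 0 (by omega))) (φ ∘ₗ κ)
    obtain ⟨f, hf⟩ := hg.descSq hS κ b hsq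
    refine ⟨f, ?_⟩
    rw [← dl_nat hg hS κ b f hsq hf, hκ]
  · intro Y _ _ _ hY
    obtain ⟨n, g, hg⟩ := exists_free_ses (R := R) Y
    obtain ⟨f', η', hη⟩ := hT.from' _ (hY.syz hg)
    obtain ⟨b, hsq⟩ := hextn n ((LinearMap.ker g).subtype ∘ₗ f')
    obtain ⟨f, hf⟩ := hS.descSq hg f' b hsq
    refine ⟨f, dl hg η', ?_⟩
    rw [← dl_nat hS hg f' b f hsq hf, hη]
  · intro j hj y
    obtain ⟨z, rfl⟩ := coex3 hS y (hT.dep _ (by omega) _)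
    rw [vanish_pi (hd _ (by omega)) z, map_zero]
  · intro s hs
    obtain ⟨n, p, q, hpq⟩ := hT.ff s hs
    obtain ⟨c, hc⟩ := hextn n p
    exact FF_of hS (q ∘ₗ c) (fun x => by simp only [LinearMap.comp_apply]; rw [hc, hpq])
  · exact PD_three hS hT.pd (PD_proj.mono (by omega))

theorem exists_T [IsNoetherianRing R] [IsLocalRing R] {N : ℕ}
    (hd : ∀ j, j < N → ∀ x : E R (ResidueField R) R j, x = 0) (i : ℕ) (hi : i + 1 ≤ N) :
    ∃ (T : ModuleCat.{u} R) (ζ : E R T R (i+1)), TData (R := R) N (i+1) T ζ := by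
  induction i with
  | zero => exact exists_T_one hi hd
  | succ i ih =>
    obtain ⟨T, ζ, hT⟩ := ih (by omega)
    exact exists_T_succ hi hd T ζ hT

end TestMod

section Steps

variable {R}
variable {A B C D F G K L M N P Q X Y Z : Type u}
  [AddCommGroup A] [Module R A] [AddCommGroup B] [Module R B] [AddCommGroup C] [Module R C]
  [AddCommGroup D] [Module R D] [AddCommGroup K] [Module R K] [AddCommGroup L] [Module R L]
  [AddCommGroup M] [Module R M] [AddCommGroup N] [Module R N] [AddCommGroup P] [Module R P]
  [AddCommGroup Q] [Module R Q] [AddCommGroup X] [Module R X] [AddCommGroup Y] [Module R Y]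
  [AddCommGroup Z] [Module R Z] [AddCommGroup F] [Module R F] [AddCommGroup G] [Module R G]
variable {j : ℕ}

open IsLocalRing

variable {𝒳 : Set (ModuleCat.{u} R)}

theorem dl_PB {i : K →ₗ[R] F} {π : F →ₗ[R] C} (h : IsSES i π) (g : B →ₗ[R] C) (y : E R K Y j) :
    dl (isSES_PB h g) y = pull g (dl h y) := by
  have := dl_nat (isSES_PB h g) h LinearMap.id (PB.fst π g) g (fun _ => rfl) (fun z => z.mem.symm) y
  rwa [pull_id] at this

theorem mem_of_PB (hr : IsResolving R 𝒳) [Module.Finite R F] [Module.Projective R F]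
    {i : K →ₗ[R] F} {π : F →ₗ[R] C} (h : IsSES i π) (g : B →ₗ[R] C) (hC : Mem 𝒳 C)
    (hP : Mem 𝒳 (PB π g)) : Mem 𝒳 B := by
  have hs : Function.Surjective (π ∘ₗ LinearMap.fst R F B - g ∘ₗ LinearMap.snd R F B) := by
    intro c
    obtain ⟨b, rfl⟩ := h.2.1 c
    exact ⟨(b, 0), by simp⟩
  have := mem_ext hr (isSES_ker _ hs) hP hC
  exact mem_retract hr (LinearMap.inr R F B) (LinearMap.snd R F B) (fun _ => rfl) this

/-- The common annihilator of the positive Ext modules. -/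
noncomputable def J (R : Type u) [CommRing R] (A : Type u) [AddCommGroup A] [Module R A] : Ideal R :=
  ⨅ j : ℕ, Module.annihilator R (E R A R (j+1))

theorem mem_J (s : R) : s ∈ J R A ↔ ∀ j, ∀ x : E R A R (j+1), s • x = 0 := by
  simp [J, Submodule.mem_iInf, Module.mem_annihilator]

/-- Test modules inside `𝒳`. -/
def TX [IsLocalRing R] (𝒳 : Set (ModuleCat.{u} R)) (N i : ℕ) : Prop :=
  ∃ (T : ModuleCat.{u} R) (ζ : E R T R i), TData (R := R) N i T ζ ∧ T ∈ 𝒳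

theorem exists_socle [IsNoetherianRing R] [IsLocalRing R] (hx : ∃ x : L, x ≠ 0)
    (hJ : ∀ y ∈ maximalIdeal R, ∃ a : ℕ, ∀ x : L, y ^ a • x = 0) :
    ∃ ξ : L, ξ ≠ 0 ∧ ∀ y ∈ maximalIdeal R, y • ξ = 0 := by
  obtain ⟨x, hx⟩ := hx
  haveI : Nontrivial L := ⟨⟨x, 0, hx⟩⟩
  obtain ⟨p, hp⟩ := associatedPrimes.nonempty R L
  have hp1 : p.IsPrime := hp.1
  obtain ⟨-, ξ, hξ⟩ := isAssociatedPrime_iff.1 hp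
  refine ⟨ξ, ?_, ?_⟩
  · rintro rfl
    apply hp1.ne_top
    rw [hξ, Ideal.eq_top_iff_one]
    simp
  · intro y hy
    obtain ⟨a, ha⟩ := hJ y hy
    have h1 : y ^ a ∈ p := by rw [hξ]; simpa using ha ξ
    have h2 := hp1.mem_of_pow_mem a h1
    rw [hξ] at h2
    simpa using h2

/-- One reduction step. -/
theorem flat_step [IsNoetherianRing R] [IsLocalRing R] {N i : ℕ} {T : Type u} [AddCommGroup T]
    [Module R T] {ζ : E R T R (i+1)} (hT : TData (R := R) N (i+1) T ζ)
    (hM0 : ∀ j, j < i → ∀ x : E R M R (j+1), x = 0) {f : M →ₗ[R] T} (hf : pull f ζ ≠ 0)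
    {n : ℕ} {q : (Fin n → R) →ₗ[R] T} (hq : IsSES (LinearMap.ker q).subtype q) :
    (∀ j, j < i → ∀ x : E R (PB q f) R (j+1), x = 0) ∧
    (∀ j, i ≤ j → ∀ x : E R (PB q f) R (j+1), ∃ y, pull (PB.snd q f) y = x) ∧
    pull (PB.snd q f) (pull f ζ) = 0 := by
  have hB := isSES_PB hq f
  refine ⟨?_, ?_, ?_⟩
  · intro j hj x
    have key : pull (PB.lift q f (LinearMap.ker q).subtype 0 (by simp)) x = 0 := by
      have h1 := dl_pull hB x
      rw [dl_PB hq] at h1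
      apply dl_inj hq
      by_cases hji : j + 2 = i + 1
      · obtain rfl : j + 1 = i := by omega
        obtain ⟨r, hr⟩ := hT.gen (dl hq (pull (PB.lift q f (LinearMap.ker q).subtype 0 (by simp)) x))
        rw [hr, map_smul] at h1
        rw [hr]
        by_cases hrm : r ∈ maximalIdeal R
        · exact hT.ann r hrm
        · exfalso
          have hu : IsUnit r := by simpa using hrm
          exact hf ((hu.smul_eq_zero).1 h1)
      · exact hT.van (j+1) (by omega) _
    obtain ⟨y, rfl⟩ := ex2 hB x key
    rw [hM0 j hj y, map_zero]
  · intro j hj x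
    refine ex2 hB x ?_
    apply dl_inj hq
    exact hT.van (j+1) (by omega) _
  · rw [← pull_comp]
    have : f ∘ₗ PB.snd q f = q ∘ₗ PB.fst q f := LinearMap.ext fun z => z.mem.symm
    rw [this, pull_comp, proj_vanish (pull q ζ), map_zero]

theorem PD_PB {i : K →ₗ[R] F} [Module.Projective R F] {π : F →ₗ[R] C} (h : IsSES i π) (g : B →ₗ[R] C)
    (hC : ∃ m, PD R m C) (hB : ∃ m, PD R m B) : ∃ m, PD R m (PB π g) := by
  obtain ⟨a, ha⟩ := hC
  obtain ⟨b, hb⟩ := hB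
  refine ⟨a + b + 1, PD_two (isSES_PB h g) ?_ (hb.mono (by omega))⟩
  exact PD_one h (PD_proj.mono (by omega)) (ha.mono (by omega))

theorem step2_aux [IsNoetherianRing R] [IsLocalRing R] (hr : IsResolving R 𝒳) {N i n : ℕ}
    (hT : TX 𝒳 N (i+1)) (hin : i < n)
    (ih : ∀ (M : Type u) [AddCommGroup M] [Module R M] [Module.Finite R M], (∃ m, PD R m M) →
      (∀ j, n ≤ j → ∀ x : E R M R (j+1), x = 0) → maximalIdeal R ≤ (J R M).radical →
      (∀ j, j < i + 1 → ∀ x : E R M R (j+1), x = 0) → Mem 𝒳 M)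
    {E0 : Type u} [AddCommGroup E0] [Module R E0] [Module.Finite R E0] (U : Submodule R E0) :
    ∀ (M : Type u) [AddCommGroup M] [Module R M] [Module.Finite R M], (∃ m, PD R m M) →
      (∀ j, n ≤ j → ∀ x : E R M R (j+1), x = 0) → maximalIdeal R ≤ (J R M).radical →
      (∀ j, j < i → ∀ x : E R M R (j+1), x = 0) →
      ∀ p : E0 →ₗ[R] E R M R (i+1), Function.Surjective p → LinearMap.ker p = U → Mem 𝒳 M := by
  induction U using WellFoundedGT.induction with
  | _ U IH =>
    intro M _ _ _ hpd hv hJ hM0 p hp hU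
    by_cases hz : ∀ x : E R M R (i+1), x = 0
    · refine ih M hpd hv hJ ?_
      intro j hj x
      rcases Nat.lt_succ_iff_lt_or_eq.1 hj with h | rfl
      · exact hM0 j h x
      · exact hz x
    · push Not at hz
      obtain ⟨ξ, hξ, hξm⟩ := exists_socle hz (fun y hy => by
        obtain ⟨a, ha⟩ := hJ hy
        exact ⟨a, (mem_J _).1 ha i⟩)
      obtain ⟨T, ζ, hT, hTX⟩ := hT
      obtain ⟨f, rfl⟩ := hT.into M (fun j hj x => hM0 j (by omega) x) ξ hξm
      haveI := hT.fin
      obtain ⟨k, q, hq⟩ := exists_free_ses (R := R) T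
      obtain ⟨h1, h2, h3⟩ := flat_step hT hM0 hξ hq
      refine mem_of_PB hr hq f hTX ?_
      refine IH (LinearMap.ker (pull (PB.snd q f) ∘ₗ p)) ?_ (PB q f) ?_ ?_ ?_ h1
        (pull (PB.snd q f) ∘ₗ p) ?_ rfl
      · rw [← hU]
        refine lt_of_le_of_ne ?_ ?_
        · intro x hx
          have hx' : p x = 0 := hx
          simp [hx']
        · intro he
          obtain ⟨x, hx⟩ := hp (pull f ζ)
          have : x ∈ LinearMap.ker (pull (PB.snd q f) ∘ₗ p) := by
            simp [hx, h3]
          rw [← he] at this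
          have hx' : p x = 0 := this
          exact hξ (by rw [← hx, hx'])
      · exact PD_PB hq f ⟨_, hT.pd⟩ hpd
      · intro j hj x
        obtain ⟨y, rfl⟩ := h2 j (by omega) x
        rw [hv j hj y, map_zero]
      · refine hJ.trans (Ideal.radical_mono ?_)
        intro s hs
        rw [mem_J] at hs ⊢
        intro j x
        by_cases hj : j < i
        · rw [h1 j hj x, smul_zero]
        · obtain ⟨y, rfl⟩ := h2 j (by omega) x
          rw [← map_smul, hs, map_zero]
      · intro x
        obtain ⟨y, rfl⟩ := h2 i le_rfl x
        obtain ⟨e, rfl⟩ := hp y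
        exact ⟨e, rfl⟩

theorem step2 [IsNoetherianRing R] [IsLocalRing R] (hr : IsResolving R 𝒳) {N n : ℕ}
    (hT : ∀ i, i < n → TX 𝒳 N (i+1)) (d : ℕ) : ∀ i, i + d = n →
    ∀ (M : Type u) [AddCommGroup M] [Module R M] [Module.Finite R M], (∃ m, PD R m M) →
      (∀ j, n ≤ j → ∀ x : E R M R (j+1), x = 0) → maximalIdeal R ≤ (J R M).radical →
      (∀ j, j < i → ∀ x : E R M R (j+1), x = 0) → Mem 𝒳 M := by
  induction d with
  | zero =>
    intro i hi M _ _ _ ⟨m, hm⟩ hv _ h0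
    haveI := F2 m M (hm.mono (by omega)) (fun j x => by
      by_cases hj : j < i
      · exact h0 j hj x
      · exact hv j (by omega) x)
    exact mem_proj hr
  | succ d ih =>
    intro i hi M _ _ _ hpd hv hJ h0
    exact step2_aux hr (hT i (by omega)) (by omega) (ih (i+1) (by omega)) (LinearMap.ker
      (LinearMap.id : E R M R (i+1) →ₗ[R] E R M R (i+1))) M hpd hv hJ h0 LinearMap.id
      Function.surjective_id rfl

theorem step1_last [IsNoetherianRing R] [IsLocalRing R] (hr : IsResolving R 𝒳) {N₀ : ℕ}
    (hd : ∀ j, j < N₀ → ∀ x : E R (ResidueField R) R j, x = 0) (N : ℕ) (hN : N + 1 ≤ N₀)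
    (Y : Type u) [AddCommGroup Y] [Module R Y] [Module.Finite R Y] (hY : Mem 𝒳 Y)
    (hTY : Top R (N+1) Y) (hJ : maximalIdeal R ≤ (J R Y).radical)
    (hlow : ∀ i, i < N → TX 𝒳 N₀ (i+1)) : ∀ i, i < N + 1 → TX 𝒳 N₀ (i+1) := by
  intro i hi
  rcases Nat.lt_succ_iff_lt_or_eq.1 hi with h | rfl
  · exact hlow i h
  obtain ⟨T, ζ, hT⟩ := exists_T hd i hN
  refine ⟨T, ζ, hT, ?_⟩
  haveI := hT.fin
  obtain ⟨f, η, hη⟩ := hT.from' Y hTY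
  obtain ⟨n, π, hπ⟩ := exists_free_ses (R := R) Y
  have hB := isSES_PB hπ f
  have hK : ∀ j, i ≤ j → ∀ x : E R (LinearMap.ker π) R (j+1), x = 0 := fun j hj x =>
    dl_inj hπ x (hTY.van _ (by omega) _)
  refine mem_of_PB hr hπ f hY ?_
  refine step2 hr hlow i 0 (by omega) (PB π f) (PD_PB hπ f hTY.pd ⟨_, hT.pd⟩) ?_ ?_
    (fun j hj => by omega)
  · intro j hj x
    obtain ⟨y, rfl⟩ := ex2 hB x (hK j hj _)
    by_cases hji : j = i
    · subst hji
      obtain ⟨r, rfl⟩ := hT.gen y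
      obtain ⟨κ, rfl⟩ := dl_surj hπ η
      rw [map_smul, ← hη, ← dl_PB, pull_dl hB, smul_zero]
    · rw [hT.van j (by omega) y, map_zero]
  · intro s hs
    obtain ⟨a, ha⟩ := hJ hs
    rw [mem_J] at ha
    refine ⟨a + 1, (mem_J _).2 ?_⟩
    intro j x
    have h1 : s ^ a • x ∈ Set.range (pull (PB.snd π f) : E R T R (j+1) →ₗ[R] _) := by
      obtain ⟨y, hy⟩ := ex2 hB (s ^ a • x) (by
        apply dl_inj hπ
        rw [map_smul, map_smul, ha])
      exact ⟨y, hy⟩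
    obtain ⟨y, hy⟩ := h1
    rw [pow_succ', mul_smul, ← hy, ← map_smul]
    have : s • y = 0 := by
      by_cases hji : j = i
      · subst hji
        obtain ⟨r, rfl⟩ := hT.gen y
        rw [smul_comm, hT.ann s hs, smul_zero]
      · rw [hT.van j (by omega) y, smul_zero]
    rw [this, map_zero]

theorem step1 [IsNoetherianRing R] [IsLocalRing R] (hr : IsResolving R 𝒳) {N₀ : ℕ}
    (hd : ∀ j, j < N₀ → ∀ x : E R (ResidueField R) R j, x = 0) (N : ℕ) (hN : N + 1 ≤ N₀) :
    ∀ (Y : Type u) [AddCommGroup Y] [Module R Y] [Module.Finite R Y], Mem 𝒳 Y → Top R (N+1) Y →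
    maximalIdeal R ≤ (J R Y).radical → ∀ i, i < N + 1 → TX 𝒳 N₀ (i+1) := by
  induction N with
  | zero =>
    intro Y _ _ _ hY hT hJ i hi
    exact step1_last hr hd 0 hN Y hY hT hJ (fun i hi => by omega) i hi
  | succ N ih =>
    intro Y _ _ _ hY hT hJ i hi
    refine step1_last hr hd (N+1) hN Y hY hT hJ ?_ i hi
    obtain ⟨n, π, hπ⟩ := exists_free_ses (R := R) Y
    refine ih (by omega) (LinearMap.ker π) (mem_syz hr hπ hY) (hT.syz hπ) ?_
    refine hJ.trans (Ideal.radical_mono ?_)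
    intro s hs
    rw [mem_J] at hs ⊢
    intro j x
    apply dl_inj hπ
    rw [map_smul, hs]

end Steps

section LocalThm

variable {R}
variable {A B C D F G K L M N P Q X Y Z : Type u}
  [AddCommGroup A] [Module R A] [AddCommGroup B] [Module R B] [AddCommGroup C] [Module R C]
  [AddCommGroup D] [Module R D] [AddCommGroup K] [Module R K] [AddCommGroup L] [Module R L]
  [AddCommGroup M] [Module R M] [AddCommGroup N] [Module R N] [AddCommGroup P] [Module R P]
  [AddCommGroup Q] [Module R Q] [AddCommGroup X] [Module R X] [AddCommGroup Y] [Module R Y]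
  [AddCommGroup Z] [Module R Z] [AddCommGroup F] [Module R F] [AddCommGroup G] [Module R G]
variable {j : ℕ}


open IsLocalRing

variable {𝒳 : Set (ModuleCat.{u} R)}

theorem kos_x [Module.Projective R F] {i : K →ₗ[R] F} {π : F →ₗ[R] M} (h : IsSES i π) (x : R) :
    x * x ∈ J R (PB π (x • LinearMap.id : M →ₗ[R] M)) := by
  rw [mem_J]
  intro j z
  have hB := isSES_PB h (x • LinearMap.id : M →ₗ[R] M)
  obtain ⟨y, hy⟩ := ex2 hB (x • z) (by
    apply dl_inj h
    have h1 := dl_pull hB z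
    rw [dl_PB h, pull_smul, pull_id] at h1
    rw [map_smul, map_smul, h1])
  obtain ⟨k, rfl⟩ := dl_surj h y
  rw [mul_smul, ← hy, ← map_smul]
  have h2 := pull_dl hB k
  rwa [dl_PB h, pull_smul, pull_id] at h2

theorem kos_J [Module.Projective R F] {i : K →ₗ[R] F} {π : F →ₗ[R] M} (h : IsSES i π) (x s : R)
    (hs : s ∈ J R M) :
    s * s ∈ J R (PB π (x • LinearMap.id : M →ₗ[R] M)) := by
  rw [mem_J] at hs ⊢
  intro j z
  have hB := isSES_PB h (x • LinearMap.id : M →ₗ[R] M)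
  obtain ⟨y, hy⟩ := ex2 hB (s • z) (by
    apply dl_inj h
    rw [map_smul, map_smul, hs])
  rw [mul_smul, ← hy, ← map_smul, hs, map_zero]

theorem kos_rad [Module.Projective R F] {i : K →ₗ[R] F} {π : F →ₗ[R] M} (h : IsSES i π) (x : R) :
    (J R M).radical ≤ (J R (PB π (x • LinearMap.id : M →ₗ[R] M))).radical := by
  rintro s ⟨a, ha⟩
  refine ⟨a + a, ?_⟩
  rw [pow_add]
  exact kos_J h x _ ha

theorem kos_top [IsNoetherianRing R] [IsLocalRing R] [Module.Finite R M]
    [Module.Projective R F] {i : K →ₗ[R] F} {π : F →ₗ[R] M} (h : IsSES i π) {x : R}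
    (hx : x ∈ maximalIdeal R) {N : ℕ} (hT : Top R (N+1) M) :
    Top R (N+1) (PB π (x • LinearMap.id : M →ₗ[R] M)) := by
  have hB := isSES_PB h (x • LinearMap.id : M →ₗ[R] M)
  refine ⟨PD_PB h _ hT.pd hT.pd, ?_, ?_⟩
  · by_contra hne
    push Not at hne
    obtain ⟨w, hw⟩ := hT.ne
    have : (⊤ : Submodule R (E R M R (N+1))) = ⊥ := by
      apply Submodule.eq_bot_of_le_smul_of_le_jacobson_bot (maximalIdeal R) _ 
        (Module.Finite.fg_top)
      · intro y _
        obtain ⟨k, hk⟩ := ex3 hB y (hne _)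
        rw [dl_PB h, pull_smul, pull_id] at hk
        rw [← hk]
        exact Submodule.smul_mem_smul hx trivial
      · exact IsLocalRing.maximalIdeal_le_jacobson _
    exact hw ((Submodule.mem_bot R).1 (this ▸ trivial : w ∈ (⊥ : Submodule R (E R M R (N+1)))))
  · intro j hj z
    obtain ⟨j, rfl⟩ : ∃ i, j = i + 1 := ⟨j-1, by omega⟩
    obtain ⟨y, rfl⟩ := ex2 hB z (by
      apply dl_inj h
      exact hT.van _ (by omega) _)
    rw [hT.van _ hj y, map_zero]

theorem iter_X [IsNoetherianRing R] [IsLocalRing R] (hr : IsResolving R 𝒳) {N : ℕ}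
    (S : Finset R) : (∀ x ∈ S, x ∈ maximalIdeal R) →
    ∀ (X : Type u) [AddCommGroup X] [Module R X] [Module.Finite R X], Mem 𝒳 X → Top R (N+1) X →
    ∃ Y : ModuleCat.{u} R, Y ∈ 𝒳 ∧ Module.Finite R Y ∧ Top R (N+1) Y ∧
      ∀ x ∈ S, x ∈ (J R Y).radical := by
  classical
  induction S using Finset.induction_on with
  | empty =>
    intro _ X _ _ hf hX hT
    exact ⟨ModuleCat.of R X, hX, hf, hT, by simp⟩
  | insert x S hxS ih =>
    intro hS X _ _ hf hX hT
    obtain ⟨Y, hY, hYf, hYT, hYJ⟩ := ih (fun y hy => hS y (Finset.mem_insert_of_mem hy)) X hX hT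
    obtain ⟨n, π, h⟩ := exists_free_ses (R := R) Y
    have hB := isSES_PB h (x • LinearMap.id : Y →ₗ[R] Y)
    refine ⟨ModuleCat.of R (PB π (x • LinearMap.id : Y →ₗ[R] Y)),
      mem_ext hr hB (mem_syz hr h hY) hY, ?_, ?_, ?_⟩
    · change Module.Finite R (PB π (x • LinearMap.id : Y →ₗ[R] Y)); infer_instance
    · exact kos_top h (hS x (Finset.mem_insert_self _ _)) hYT
    · intro y hy
      rcases Finset.mem_insert.1 hy with rfl | hy
      · exact ⟨2, by rw [pow_two]; exact kos_x h y⟩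
      · exact kos_rad h x (hYJ y hy)

theorem iter_M [IsNoetherianRing R] [IsLocalRing R] (hr : IsResolving R 𝒳) {N : ℕ}
    (S : Finset R) : (∀ x ∈ S, x ∈ maximalIdeal R) →
    ∀ (X : Type u) [AddCommGroup X] [Module R X] [Module.Finite R X], Top R (N+1) X →
    (∀ y ∈ maximalIdeal R, ∃ a : ℕ, Fac 𝒳 (y ^ a) X) →
    ∃ Y : ModuleCat.{u} R, (Y ∈ 𝒳 → Mem 𝒳 X) ∧ Module.Finite R Y ∧ Top R (N+1) Y ∧
      (∀ y ∈ maximalIdeal R, ∃ a : ℕ, Fac 𝒳 (y ^ a) Y) ∧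
      ∀ x ∈ S, x ∈ (J R Y).radical := by
  classical
  induction S using Finset.induction_on with
  | empty =>
    intro _ X _ _ hf hT hX
    exact ⟨ModuleCat.of R X, id, hf, hT, hX, by simp⟩
  | insert x S hxS ih =>
    intro hS X _ _ hf hT hX
    obtain ⟨Y, hY, hYf, hYT, hYF, hYJ⟩ :=
      ih (fun y hy => hS y (Finset.mem_insert_of_mem hy)) X hT hX
    obtain ⟨n, π, h⟩ := exists_free_ses (R := R) Y
    have hxm := hS x (Finset.mem_insert_self _ _)
    obtain ⟨a, ha⟩ := hYF x hxm
    have ha : Fac 𝒳 (x ^ (a + 1)) Y := by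
      have := (facIdeal hr Y).mul_mem_left x ha
      rw [pow_succ']
      exact this
    have hB := isSES_PB h (x ^ (a+1) • LinearMap.id : Y →ₗ[R] Y)
    refine ⟨ModuleCat.of R (PB π (x ^ (a+1) • LinearMap.id : Y →ₗ[R] Y)),
      fun hm => hY (mem_of_PB_mem hr h ha hm), ?_, ?_, ?_, ?_⟩
    · change Module.Finite R (PB π (x ^ (a+1) • LinearMap.id : Y →ₗ[R] Y)); infer_instance
    · exact kos_top h (Ideal.pow_mem_of_mem _ hxm _ (by omega)) hYT
    · intro y hy
      obtain ⟨b, hb⟩ := hYF y hy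
      refine ⟨b + b, ?_⟩
      rw [pow_add]
      exact fac_ext hr hB (fac_syz hr h hb) hb
    · intro y hy
      rcases Finset.mem_insert.1 hy with rfl | hy
      · exact ⟨(a+1) * 2, by rw [pow_mul, pow_two]; exact kos_x h _⟩
      · exact kos_rad h _ (hYJ y hy)

theorem local_thm [IsNoetherianRing R] [IsLocalRing R] (hr : IsResolving R 𝒳)
    (M : ModuleCat.{u} R) [Module.Finite R M]
    (hF : ∀ y ∈ maximalIdeal R, ∃ a : ℕ, Fac 𝒳 (y ^ a) M)
    (hX : ¬ Module.Free R M → ∃ X ∈ 𝒳, pdim R M ≤ pdim R X ∧ pdim R X ≠ ⊤) : M ∈ 𝒳 := by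
  by_cases hfree : Module.Free R M
  · exact hr.proj_mem M ‹_› inferInstance
  obtain ⟨X, hX, hle, hne⟩ := hX hfree
  haveI : Module.Finite R X := hr.fg _ hX
  obtain ⟨n, N, hn, hnN, hTM, hTX⟩ := top_of_pdim_le hfree hle hne
  obtain ⟨n, rfl⟩ : ∃ i, n = i + 1 := ⟨n-1, by omega⟩
  obtain ⟨N, rfl⟩ : ∃ i, N = i + 1 := ⟨N-1, by omega⟩
  have hd := depth_bound hTX
  obtain ⟨S, hS⟩ := IsNoetherian.noetherian (maximalIdeal R)
  have hSm : ∀ x ∈ S, x ∈ maximalIdeal R := fun x hx => by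
    rw [← hS]; exact Submodule.subset_span hx
  have hrad : ∀ I : Ideal R, (∀ x ∈ S, x ∈ I.radical) → maximalIdeal R ≤ I.radical := by
    intro I hI
    rw [← hS]
    exact Submodule.span_le.2 hI
  obtain ⟨Y, hY, _, hYT, hYJ⟩ := iter_X hr S hSm X hX hTX
  have hTX' := step1 hr hd N le_rfl Y hY hYT (hrad _ hYJ)
  obtain ⟨B, hB, _, hBT, hBF, hBJ⟩ := iter_M hr S hSm M hTM hF
  refine hB (step2 hr (n := n+1) (fun i hi => hTX' i (by omega)) (n+1) 0 (by omega) B hBT.pd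
    (fun j hj => hBT.van _ (by omega)) (hrad _ hBJ) (fun j hj => by omega))

end LocalThm

section Glob

variable {R}
variable {A B C D F G K L M N P Q X Y Z : Type u}
  [AddCommGroup A] [Module R A] [AddCommGroup B] [Module R B] [AddCommGroup C] [Module R C]
  [AddCommGroup D] [Module R D] [AddCommGroup K] [Module R K] [AddCommGroup L] [Module R L]
  [AddCommGroup M] [Module R M] [AddCommGroup N] [Module R N] [AddCommGroup P] [Module R P]
  [AddCommGroup Q] [Module R Q] [AddCommGroup X] [Module R X] [AddCommGroup Y] [Module R Y]
  [AddCommGroup Z] [Module R Z] [AddCommGroup F] [Module R F] [AddCommGroup G] [Module R G]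
variable {j : ℕ}


open IsLocalRing

variable {𝒳 : Set (ModuleCat.{u} R)} (W : Submonoid R)

theorem loc_smul (r : R) (z : LocalizedModule W M) :
    algebraMap R (Localization W) r • z = r • z := algebraMap_smul _ _ _

theorem loc_ext {Q : Type u} [AddCommGroup Q] [Module (Localization W) Q]
    {f g : LocalizedModule W M →ₗ[Localization W] Q}
    (h : ∀ m : M, f (LocalizedModule.mk m 1) = g (LocalizedModule.mk m 1)) : ∀ z, f z = g z := by
  intro z
  induction z using LocalizedModule.induction_on with
  | _ m s =>
    have : (LocalizedModule.mk m s) = Localization.mk (1 : R) s • LocalizedModule.mk m 1 := by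
      rw [LocalizedModule.mk_smul_mk]; simp
    rw [this, map_smul, map_smul, h]

theorem loc_extend {Q : Type u} [AddCommGroup Q] [Module R Q] [Module (Localization W) Q]
    [IsScalarTower R (Localization W) Q] (f : M →ₗ[R] Q) :
    ∃ g : LocalizedModule W M →ₗ[Localization W] Q, ∀ m : M, g (LocalizedModule.mk m 1) = f m := by
  have hu : ∀ s : W, IsUnit ((algebraMap R (Module.End R Q)) s) := by
    intro s
    have := (IsLocalization.map_units (Localization W) s).map
      (algebraMap (Localization W) (Module.End (Localization W) Q))
    rw [Module.End.isUnit_iff] at this ⊢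
    convert this using 1
    ext q
    simp
  refine ⟨(LocalizedModule.lift W f hu).extendScalarsOfIsLocalization W (Localization W), ?_⟩
  intro m
  exact LocalizedModule.lift_mk_one _ _ hu m

theorem loc_ses {i : K →ₗ[R] F} {π : F →ₗ[R] M} (h : IsSES i π) :
    IsSES (LocalizedModule.map W i) (LocalizedModule.map W π) := by
  refine ⟨LocalizedModule.map_injective W i h.1, LocalizedModule.map_surjective W π h.2.1, ?_⟩
  have := LocalizedModule.map_exact W i π (LinearMap.exact_iff.2 h.2.2.symm)
  ext z
  exact (this z).symm

/-- Lifting maps up to denominators. -/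
theorem loc_lift [IsNoetherianRing R] [Module.Finite R M]
    (φ : LocalizedModule W M →ₗ[Localization W] LocalizedModule W N) :
    ∃ (s : W) (ψ : M →ₗ[R] N), ∀ m : M, LocalizedModule.mk (ψ m) (1 : W) =
      (s : R) • φ (LocalizedModule.mk m 1) := by
  haveI := Module.finitePresentation_of_finite R M
  obtain ⟨ψ, s, h⟩ := Module.FinitePresentation.exists_lift_of_isLocalizedModule W
    (LocalizedModule.mkLinearMap W N) ((φ.restrictScalars R) ∘ₗ LocalizedModule.mkLinearMap W M)
  exact ⟨s, ψ, fun m => LinearMap.congr_fun h m⟩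

theorem loc_eq [Module.Finite R M] {f g : M →ₗ[R] N}
    (h : ∀ m : M, LocalizedModule.mk (f m) (1 : W) = LocalizedModule.mk (g m) 1) :
    ∃ s : W, ∀ m, (s : R) • f m = (s : R) • g m := by
  obtain ⟨s, hs⟩ := Module.Finite.exists_smul_of_comp_eq_of_isLocalizedModule W
    (LocalizedModule.mkLinearMap W N) f g (LinearMap.ext h)
  exact ⟨s, fun m => LinearMap.congr_fun hs m⟩

theorem ses_bij {B' A' C' : Type u} [AddCommGroup A'] [Module R A'] [AddCommGroup B'] [Module R B']
    [AddCommGroup C'] [Module R C'] {i : A →ₗ[R] B} {π : B →ₗ[R] C} (h : IsSES i π)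
    {i' : A' →ₗ[R] B'} {π' : B' →ₗ[R] C'} (h' : IsSES i' π') (a : A →ₗ[R] A') (b : B →ₗ[R] B')
    (c : C →ₗ[R] C') (h1 : ∀ x, b (i x) = i' (a x)) (h2 : ∀ x, π' (b x) = c (π x))
    (ha : Function.Bijective a) (hc : Function.Bijective c) : Function.Bijective b := by
  constructor
  · rw [injective_iff_map_eq_zero]
    intro x hx
    have h3 : π x = 0 := hc.1 (by rw [← h2, hx, map_zero, map_zero])
    obtain ⟨y, rfl⟩ := h.lift x h3
    rw [h1] at hx
    have : y = 0 := ha.1 (h'.1 (by rw [hx, map_zero, map_zero]))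
    rw [this, map_zero]
  · intro y
    obtain ⟨z, hz⟩ := hc.2 (π' y)
    obtain ⟨x, rfl⟩ := h.2.1 z
    obtain ⟨w, hw⟩ := h'.lift (y - b x) (by rw [map_sub, h2, hz, sub_self])
    obtain ⟨v, rfl⟩ := ha.2 w
    exact ⟨x + i v, by rw [map_add, h1, hw]; abel⟩

/-- The localized subcategory. -/
def locX (𝒳 : Set (ModuleCat.{u} R)) : Set (ModuleCat.{u} (Localization W)) :=
  {N | ∃ X ∈ 𝒳, ∃ (f : N →ₗ[Localization W] LocalizedModule W X)
    (g : LocalizedModule W X →ₗ[Localization W] N), ∀ z, g (f z) = z}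

theorem locX_loc (hX : Mem 𝒳 X) : Mem (locX W 𝒳) (LocalizedModule W X) :=
  ⟨ModuleCat.of R X, hX, LinearMap.id, LinearMap.id, fun _ => rfl⟩

theorem locX_retract {N N' : Type u} [AddCommGroup N] [Module (Localization W) N]
    [AddCommGroup N'] [Module (Localization W) N'] (f : N →ₗ[Localization W] N')
    (g : N' →ₗ[Localization W] N) (h : ∀ z, g (f z) = z) (hN : Mem (locX W 𝒳) N') :
    Mem (locX W 𝒳) N := by
  obtain ⟨X, hX, a, b, hab⟩ := hN
  refine ⟨X, hX, a ∘ₗ f, g ∘ₗ b, ?_⟩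
  intro z
  have := hab (f z)
  simp only [LinearMap.comp_apply]
  rw [this, h]

theorem locX_prod (hr : IsResolving R 𝒳) {N N' : Type u} [AddCommGroup N]
    [Module (Localization W) N] [AddCommGroup N'] [Module (Localization W) N']
    (hN : Mem (locX W 𝒳) N) (hN' : Mem (locX W 𝒳) N') : Mem (locX W 𝒳) (N × N') := by
  obtain ⟨X, hX, a, b, hab⟩ := hN
  obtain ⟨Y, hY, a', b', hab'⟩ := hN'
  have e1 : ∀ z, LocalizedModule.map W (LinearMap.fst R X Y)
      (LocalizedModule.map W (LinearMap.inl R X Y) z) = z := by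
    intro z; induction z using LocalizedModule.induction_on; simp [LocalizedModule.map_mk]
  have e2 : ∀ z, LocalizedModule.map W (LinearMap.fst R X Y)
      (LocalizedModule.map W (LinearMap.inr R X Y) z) = 0 := by
    intro z; induction z using LocalizedModule.induction_on; simp [LocalizedModule.map_mk]
  have e3 : ∀ z, LocalizedModule.map W (LinearMap.snd R X Y)
      (LocalizedModule.map W (LinearMap.inl R X Y) z) = 0 := by
    intro z; induction z using LocalizedModule.induction_on; simp [LocalizedModule.map_mk]
  have e4 : ∀ z, LocalizedModule.map W (LinearMap.snd R X Y)
      (LocalizedModule.map W (LinearMap.inr R X Y) z) = z := by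
    intro z; induction z using LocalizedModule.induction_on; simp [LocalizedModule.map_mk]
  refine ⟨ModuleCat.of R (X × Y), mem_prod hr hX hY,
    (LocalizedModule.map W (LinearMap.inl R X Y) ∘ₗ a).coprod
      (LocalizedModule.map W (LinearMap.inr R X Y) ∘ₗ a'),
    (b ∘ₗ LocalizedModule.map W (LinearMap.fst R X Y)).prod
      (b' ∘ₗ LocalizedModule.map W (LinearMap.snd R X Y)), ?_⟩
  rintro ⟨z, w⟩
  have h1 := hab z
  have h2 := hab' w
  ext
  · change b (LocalizedModule.map W (LinearMap.fst R X Y)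
      (LocalizedModule.map W (LinearMap.inl R X Y) (a z) +
        LocalizedModule.map W (LinearMap.inr R X Y) (a' w))) = z
    rw [map_add, e1, e2, add_zero]; exact h1
  · change b' (LocalizedModule.map W (LinearMap.snd R X Y)
      (LocalizedModule.map W (LinearMap.inl R X Y) (a z) +
        LocalizedModule.map W (LinearMap.inr R X Y) (a' w))) = w
    rw [map_add, e3, e4, zero_add]; exact h2

theorem locX_proj (hr : IsResolving R 𝒳) {P : Type u} [AddCommGroup P]
    [Module (Localization W) P] [Module.Finite (Localization W) P]
    [Module.Projective (Localization W) P] : Mem (locX W 𝒳) P := by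
  letI : Module R P := Module.compHom P (algebraMap R (Localization W))
  haveI : IsScalarTower R (Localization W) P := IsScalarTower.of_algebraMap_smul fun _ _ => rfl
  obtain ⟨n, q, hq⟩ := Module.Finite.exists_fin' (Localization W) P
  obtain ⟨Θ, hΘ⟩ := loc_extend W (Fintype.linearCombination R (fun i : Fin n => q (Pi.single i 1)))
  have hs : Function.Surjective Θ := by
    intro y
    obtain ⟨z, rfl⟩ := hq y
    refine ⟨∑ i, z i • LocalizedModule.mk (Pi.single i 1) 1, ?_⟩
    rw [map_sum]
    simp_rw [map_smul, hΘ]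
    conv_rhs => rw [pi_eq_sum_univ' z, map_sum]
    refine Finset.sum_congr rfl fun i _ => ?_
    rw [map_smul]
    simp
  obtain ⟨σ, hσ⟩ := Module.projective_lifting_property Θ LinearMap.id hs
  exact locX_retract W σ Θ (fun z => LinearMap.congr_fun hσ z) (locX_loc W (mem_proj hr))

theorem locX_ext' [IsNoetherianRing R] (hr : IsResolving R 𝒳) (hX : Mem 𝒳 X) (hZ : Mem 𝒳 Z)
    {Q : Type u} [AddCommGroup Q] [Module (Localization W) Q]
    {i : LocalizedModule W X →ₗ[Localization W] Q} {π : Q →ₗ[Localization W] LocalizedModule W Z}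
    (h : IsSES i π) : Mem (locX W 𝒳) Q := by
  letI : Module R Q := Module.compHom Q (algebraMap R (Localization W))
  haveI : IsScalarTower R (Localization W) Q := IsScalarTower.of_algebraMap_smul fun _ _ => rfl
  haveI : Module.Finite R Z := hr.fg _ hZ
  obtain ⟨n, ρ, hρ⟩ := exists_free_ses (R := R) Z
  haveI : Module.Finite R (LinearMap.ker ρ) := inferInstance
  have hρ' := loc_ses W hρ
  obtain ⟨l, hl⟩ := Module.projective_lifting_property π (LocalizedModule.map W ρ) h.2.1
  replace hl : ∀ z, π (l z) = LocalizedModule.map W ρ z := fun z => LinearMap.congr_fun hl z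
  obtain ⟨φ, hφ⟩ := h.liftMap (D := LocalizedModule W (LinearMap.ker ρ))
      (l ∘ₗ LocalizedModule.map W (LinearMap.ker ρ).subtype) (by
    intro z
    have h0 := hl (LocalizedModule.map W (LinearMap.ker ρ).subtype z)
    rw [hρ'.comp_zero] at h0
    exact h0)
  obtain ⟨s, ψ, hψ⟩ := loc_lift W φ
  let ι := (LinearMap.ker ρ).subtype
  let θ : PO ψ ι →ₗ[R] Q := PO.desc ψ ι ((i.restrictScalars R) ∘ₗ LocalizedModule.mkLinearMap W X)
    ((s : R) • ((l.restrictScalars R) ∘ₗ LocalizedModule.mkLinearMap W (Fin n → R))) (by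
      intro c
      simp only [LinearMap.comp_apply, LinearMap.smul_apply, LocalizedModule.mkLinearMap_apply,
        LinearMap.restrictScalars_apply]
      rw [hψ, ← loc_smul, map_smul, hφ, LinearMap.comp_apply, LocalizedModule.map_mk,
        algebraMap_smul])
  obtain ⟨Θ, hΘ⟩ := loc_extend W θ
  have hD := isSES_PO hρ ψ
  have hDX : Mem 𝒳 (PO ψ ι) := mem_ext hr hD hX hZ
  have hb : Function.Bijective Θ := by
    refine ses_bij (loc_ses W hD) h LinearMap.id Θ
      (algebraMap R (Localization W) s • LinearMap.id) ?_ ?_ Function.bijective_id ?_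
    · refine loc_ext W (f := Θ ∘ₗ LocalizedModule.map W _) (g := i ∘ₗ LinearMap.id) ?_
      intro x
      rw [LinearMap.comp_apply, LocalizedModule.map_mk, hΘ]
      have : θ (PO.inl ψ ι x) = i (LocalizedModule.mk x 1) := by
        change θ (Submodule.Quotient.mk (x, 0)) = _
        simp only [θ, PO.desc_mk]
        simp
      exact this
    · refine loc_ext W (f := π ∘ₗ Θ)
        (g := (algebraMap R (Localization W) s • LinearMap.id) ∘ₗ LocalizedModule.map W _) ?_
      intro z
      rw [LinearMap.comp_apply, hΘ, LinearMap.comp_apply, LocalizedModule.map_mk]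
      obtain ⟨⟨x, y⟩, rfl⟩ := Submodule.Quotient.mk_surjective _ z
      simp only [θ, PO.desc_mk, LinearMap.comp_apply, LinearMap.smul_apply,
        LocalizedModule.mkLinearMap_apply, LinearMap.restrictScalars_apply, map_add, h.comp_zero,
        zero_add, LinearMap.zero_apply, LinearMap.id_apply]
      rw [← algebraMap_smul (Localization W) (s : R) (l _), map_smul, hl, LocalizedModule.map_mk]
    · have := (IsLocalization.map_units (Localization W) s).map
        (algebraMap (Localization W) (Module.End (Localization W) (LocalizedModule W Z)))
      rw [Module.End.isUnit_iff] at this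
      exact this
  let e := LinearEquiv.ofBijective Θ hb
  exact locX_retract W e.symm.toLinearMap e.toLinearMap (fun z => by simp) (locX_loc W hDX)

theorem locX_resolving [IsNoetherianRing R] (hr : IsResolving R 𝒳) :
    IsResolving (Localization W) (locX W 𝒳) where
  fg := by
    rintro M ⟨X, hX, f, g, hfg⟩
    haveI : Module.Finite R X := hr.fg _ hX
    haveI : Module.FinitePresentation R X := Module.finitePresentation_of_finite R X
    exact Module.Finite.of_surjective g (fun z => ⟨f z, hfg z⟩)
  iso_closed := by
    rintro M N ⟨e⟩ hM
    exact locX_retract W e.symm.toLinearMap e.toLinearMap (fun z => by simp) hM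
  proj_mem := by
    intro M _ _
    exact locX_proj W hr
  summand_closed := by
    intro M N h
    exact locX_retract W (LinearMap.inl _ M N) (LinearMap.fst _ M N) (fun z => rfl) h
  ext_closed := by
    rintro A B C f g h ⟨X, hX, a, b, hab⟩ ⟨Z, hZ, a', b', hab'⟩
    obtain ⟨Q, i, π, hs, F, G, hFG⟩ := ext_fac h (a := 1) (c := 1)
      (f := a) (g := b) (by simpa using hab) (f' := a') (g' := b') (by simpa using hab')
    exact locX_retract W F G (by simpa using hFG) (locX_ext' W hr hX hZ hs)
  syzygy_closed := by
    rintro K P M f g h _ _ _ ⟨X, hX, a, b, hab⟩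
    haveI : Module.Finite R X := hr.fg _ hX
    obtain ⟨n, ρ, hρ⟩ := exists_free_ses (R := R) X
    obtain ⟨F, G, hFG⟩ := syz_fac h (loc_ses W hρ) (s := 1) (f := a) (g := b) (by simpa using hab)
    exact locX_retract W F G (by simpa using hFG)
      (locX_prod W hr (locX_loc W (mem_syz hr hρ hX)) (locX_proj W hr))

theorem fac_loc {s : R} (h : Fac 𝒳 s M) :
    Fac (locX W 𝒳) (algebraMap R (Localization W) s) (LocalizedModule W M) := by
  obtain ⟨X, hX, f, g, hfg⟩ := h
  refine ⟨ModuleCat.of _ (LocalizedModule W X), locX_loc W hX, LocalizedModule.map W f,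
    LocalizedModule.map W g, ?_⟩
  intro z
  induction z using LocalizedModule.induction_on with
  | _ m t =>
    rw [loc_smul]
    simp [LocalizedModule.map_mk, hfg, LocalizedModule.smul'_mk]

theorem fac_of_loc [IsNoetherianRing R] (hr : IsResolving R 𝒳) [Module.Finite R M]
    (h : Mem (locX W 𝒳) (LocalizedModule W M)) : ∃ s ∈ W, Fac 𝒳 s M := by
  obtain ⟨X, hX, f, g, hfg⟩ := h
  haveI : Module.Finite R X := hr.fg _ hX
  obtain ⟨s, F, hF⟩ := loc_lift (M := M) (N := X) W f
  obtain ⟨t, G, hG⟩ := loc_lift (M := X) (N := M) W g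
  obtain ⟨w, hw⟩ := loc_eq W (f := G ∘ₗ F) (g := (s * t : R) • LinearMap.id) (by
    intro m
    rw [LinearMap.comp_apply, hG, hF, ← loc_smul, ← loc_smul, map_smul, loc_smul, loc_smul]
    have := hfg (LocalizedModule.mk m 1)
    rw [this, LocalizedModule.smul'_mk, LocalizedModule.smul'_mk, smul_smul, mul_comm]
    rfl)
  refine ⟨w * (s * t), mul_mem w.2 (mul_mem s.2 t.2), X, hX, F, (w : R) • G, ?_⟩
  intro m
  have := hw m
  simp only [LinearMap.comp_apply, LinearMap.smul_apply, LinearMap.id_apply] at this ⊢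
  rw [this, smul_smul]

theorem main_thm [IsNoetherianRing R] (hr : IsResolving R 𝒳) (hsub : 𝒳 ⊆ LPDcat R)
    (M : ModuleCat.{u} R) (hM : Module.Finite R M)
    (h : ∀ p ∈ NF R M, ∃ X ∈ 𝒳, localPdim R p M ≤ localPdim R p X) : M ∈ 𝒳 := by
  by_cases htop : facIdeal hr M = ⊤
  · exact mem_of_fac_one hr ((Ideal.eq_top_iff_one _).1 htop)
  exfalso
  obtain ⟨q, hq⟩ := Ideal.nonempty_minimalPrimes htop
  haveI hqp : q.IsPrime := hq.1.1
  let p : PrimeSpectrum R := ⟨q, hqp⟩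
  haveI : IsNoetherianRing (Localization.AtPrime q) :=
    IsLocalization.isNoetherianRing q.primeCompl _ inferInstance
  have hrl := locX_resolving q.primeCompl hr
  haveI : Module.FinitePresentation R M := Module.finitePresentation_of_finite R M
  have key : ModuleCat.of (Localization.AtPrime q) (LocalizedModule q.primeCompl M) ∈
      locX q.primeCompl 𝒳 := by
    refine local_thm (R := Localization.AtPrime q) hrl _ ?_ ?_
    · intro y hy
      rw [← IsLocalization.AtPrime.map_eq_maximalIdeal q (Localization.AtPrime q),
        ← IsLocalization.AtPrime.radical_map_of_mem_minimalPrimes (Localization.AtPrime q) q _ hq] at hy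
      obtain ⟨a, ha⟩ := hy
      refine ⟨a, ?_⟩
      have hle : (facIdeal hr M).map (algebraMap R (Localization.AtPrime q)) ≤
          facIdeal hrl (LocalizedModule q.primeCompl M) := by
        rw [Ideal.map_le_iff_le_comap]
        intro s hs
        exact fac_loc q.primeCompl hs
      exact hle ha
    · intro hnf
      obtain ⟨X, hX, hle⟩ := h p hnf
      exact ⟨localizeM R p X, locX_loc q.primeCompl hX, hle, (hsub hX).2 p⟩
  obtain ⟨s, hs, hF⟩ := fac_of_loc q.primeCompl hr key
  exact hs (hq.1.2 hF)

end Glob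

/-- Theorem 4.6: membership criterion for a resolving subcategory contained in `LPD(R)`. -/
theorem mem_resolving_of_LPD_iff [IsNoetherianRing R]
    (𝒳 : Set (ModuleCat.{u} R)) (h𝒳 : IsResolving R 𝒳) (hsub : 𝒳 ⊆ LPDcat R)
    (M : ModuleCat.{u} R) (hM : Module.Finite R M) :
    M ∈ 𝒳 ↔ ∀ p ∈ NF R M, ∃ X ∈ 𝒳, localPdim R p M ≤ localPdim R p X := by
  constructor
  · intro h p _
    exact ⟨M, h, le_rfl⟩
  · exact main_thm h𝒳 hsub M hM

end ResolvPaper
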